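/- arXiv:1809.08619 — 2 statements merged into one kernel-verified Lean document; each statement's English description precedes it below -/
import Mathlib

section
/- Let f be an ergodic invertible measure-preserving transformation of a standard Borel probability space (X,μ) and let (f,A) be an essentially unbounded cocycle with values in SL±(2,ℝ). Let μ̂ be an (f,A)-invariant probability measure on X × ℙ(ℝ²) (projecting to μ and invariant under F(x,E) = (f(x), A(x)E)), with disintegration dμ̂ = ν_x dμ(x) over the projection to X. Then for μ-almost every x ∈ X, sup{ ν_x({E}) : E ∈ ℙ(ℝ²) } ≥ 1/2; equivalently, for μ-a.e. x the conditional measure ν_x has an atom of mass at least 1/2. -/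
open MeasureTheory Filter
open scoped ENNReal

/-- Matrices are measurable as functions of their entries. -/
instance matrixMeasurableSpace {m n α : Type*} [MeasurableSpace α] :
    MeasurableSpace (Matrix m n α) :=
  show MeasurableSpace (m → n → α) from inferInstance

/-- The shift map on two-sided sequences. -/
def shift {Y : Type*} (ω : ℤ → Y) : ℤ → Y := fun n => ω (n + 1)

/-- The skew-shift `f̄(ω,x) = (θω, f_{ω₀}(x))` of a random transformation. -/
def fbar {Y X : Type*} (f : Y → X → X) : (ℤ → Y) × X → (ℤ → Y) × X :=
  fun q => (shift q.1, f (q.1 0) q.2)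

/-- The locally constant map `Ā(ω,x) = A_{ω₀}(x)` defining a random cocycle. -/
def Abar {Y X G : Type*} (A : Y → X → G) : (ℤ → Y) × X → G := fun q => A (q.1 0) q.2

/-- Iterates of a cocycle: `cocycleIter T A n z = A(T^{n-1} z) ⋯ A(T z) A(z)`. -/
def cocycleIter {Z G : Type*} [Monoid G] (T : Z → Z) (A : Z → G) : ℕ → Z → G
  | 0, _ => 1
  | n + 1, z => cocycleIter T A n (T z) * A z

/-- Lower asymptotic density of a set of natural numbers. -/
noncomputable def lowerDensity (D : Set ℕ) : ℝ :=
  Filter.liminf (fun n : ℕ => ((D ∩ Set.Iic n).ncard : ℝ) / n) Filter.atTop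

/-- A sequence of reals converges essentially to infinity: for every `K > 0` the set
of times at which the sequence is `≤ K` has lower asymptotic density zero. -/
def ConvergesEssentiallyToInfinity (u : ℕ → ℝ) : Prop :=
  ∀ K > (0 : ℝ), lowerDensity {n | u n ≤ K} = 0

/-- The operator norm of a real `d × d` matrix acting on Euclidean space. -/
noncomputable def opNorm {d : ℕ} (M : Matrix (Fin d) (Fin d) ℝ) : ℝ :=
  ‖LinearMap.toContinuousLinearMap (Matrix.toEuclideanLin M)‖

/-- The projective space of `ℝ^d`. -/
abbrev Proj (d : ℕ) := Projectivization ℝ (Fin d → ℝ)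

noncomputable instance (d : ℕ) : MeasurableSpace (Proj d) :=
  show MeasurableSpace (Quotient _) from inferInstance

lemma glInjective {d : ℕ} (A : GL (Fin d) ℝ) :
    Function.Injective (Matrix.toLin' (A : Matrix (Fin d) (Fin d) ℝ)) := by
  have h : Function.LeftInverse
      (Matrix.toLin' (((A⁻¹ : GL (Fin d) ℝ)) : Matrix (Fin d) (Fin d) ℝ))
      (Matrix.toLin' ((A : Matrix (Fin d) (Fin d) ℝ))) := by
    intro v
    rw [← Matrix.toLin'_mul_apply]
    have h1 : ((A⁻¹ : GL (Fin d) ℝ) : Matrix (Fin d) (Fin d) ℝ) *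
        (A : Matrix (Fin d) (Fin d) ℝ) = 1 := by
      exact_mod_cast A.inv_mul
    rw [h1]
    simp
  exact h.injective

/-- The projective action of an invertible matrix on `ℙ(ℝ^d)`. -/
noncomputable def projAction {d : ℕ} (A : GL (Fin d) ℝ) : Proj d → Proj d :=
  Projectivization.map (Matrix.toLin' (A : Matrix (Fin d) (Fin d) ℝ)) (glInjective A)

/-!
Give the projective line the metric `sin ∠(E, F)`. If a matrix stretches some line by a factor `s`,
the lines it stretches by less than `r * s / 2` lie in one ball of radius `r`, and the images of all
other lines lie in another such ball as soon as `s ^ 2 / |det|` exceeds `4 / r ^ 3`. Hence, if the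
condition number of `A^n(x)` is that large, one of the measures `ν_x` and `ν_{f^n x} = A^n(x)_* ν_x`
gives mass at least `1 / 2` to some ball of radius `r`. Consequently an orbit starting in the set
where all such balls have mass less than `1 / 2` returns to it only at times when the condition
number is bounded, that is, along a set of times of lower density zero; by the maximal ergodic
theorem such a set is null. A compactness argument as `r → 0` turns the balls into atoms.
-/

open Metric ProbabilityTheory Topology
open WithLp (toLp)
open scoped Matrix

section LowerDensity

lemma ncard_inter_Iic_div_mem_Icc (D : Set ℕ) (n : ℕ) :
    ((D ∩ Set.Iic n).ncard : ℝ) / n ∈ Set.Icc 0 2 := by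
  refine ⟨by positivity, ?_⟩
  rcases n.eq_zero_or_pos with rfl | hn
  · simp
  have hcard : (D ∩ Set.Iic n).ncard ≤ n + 1 := by
    simpa [Set.ncard_eq_toFinset_card'] using
      Set.ncard_le_ncard (s := D ∩ Set.Iic n) Set.inter_subset_right (Set.finite_Iic n)
  rw [div_le_iff₀ (by exact_mod_cast hn)]
  exact_mod_cast (by omega : (D ∩ Set.Iic n).ncard ≤ 2 * n)

lemma lowerDensity_mono {D E : Set ℕ} (h : D ⊆ E) : lowerDensity D ≤ lowerDensity E := by
  refine liminf_le_liminf (Eventually.of_forall fun n => ?_)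
    (isBoundedUnder_of ⟨0, fun n => (ncard_inter_Iic_div_mem_Icc D n).1⟩)
    (isBoundedUnder_of ⟨2, fun n => (ncard_inter_Iic_div_mem_Icc E n).2⟩).isCoboundedUnder_ge
  have : (D ∩ Set.Iic n).ncard ≤ (E ∩ Set.Iic n).ncard :=
    Set.ncard_le_ncard (Set.inter_subset_inter_left _ h) ((Set.finite_Iic n).inter_of_right E)
  gcongr

lemma exists_ncard_inter_Iic_lt_of_lowerDensity_lt {D : Set ℕ} {δ : ℝ} (h : lowerDensity D < δ) :
    ∃ n : ℕ, ((D ∩ Set.Iic n).ncard : ℝ) < δ * n := by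
  have hfreq := frequently_lt_of_liminf_lt (isBoundedUnder_of
    ⟨2, fun n => (ncard_inter_Iic_div_mem_Icc D n).2⟩).isCoboundedUnder_ge h
  obtain ⟨n, hn, hpos⟩ := (hfreq.and_eventually (eventually_gt_atTop 0)).exists
  exact ⟨n, (div_lt_iff₀ (by exact_mod_cast hpos)).1 hn⟩

lemma ConvergesEssentiallyToInfinity.sq {u : ℕ → ℝ} (h : ConvergesEssentiallyToInfinity u)
    (hu : ∀ n, 0 ≤ u n) : ConvergesEssentiallyToInfinity fun n => u n ^ 2 := by
  intro K hK
  simpa only [Real.le_sqrt (hu _) hK.le] using h (√K) (Real.sqrt_pos.2 hK)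

end LowerDensity

section MaximalErgodic

variable {X : Type*} {f : X → X} {g : X → ℝ}

lemma partialSups_birkhoffSum_nonneg (f : X → X) (g : X → ℝ) (n : ℕ) (x : X) :
    0 ≤ partialSups (birkhoffSum f g) n x := by
  simpa using le_partialSups_of_le (birkhoffSum f g) n.zero_le x

lemma partialSups_birkhoffSum_le_add {n : ℕ} {x : X}
    (hx : 0 < partialSups (birkhoffSum f g) n x) :
    partialSups (birkhoffSum f g) n x ≤ g x + partialSups (birkhoffSum f g) n (f x) := by
  rw [Pi.partialSups_apply] at hx ⊢
  obtain ⟨k, hkn, hk⟩ := exists_partialSups_eq (birkhoffSum f g · x) n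
  rw [hk] at hx ⊢
  obtain ⟨j, rfl⟩ := Nat.exists_eq_succ_of_ne_zero (n := k) (by rintro rfl; simp at hx)
  rw [birkhoffSum_succ']
  gcongr
  exact le_partialSups_of_le (birkhoffSum f g) (j.le_succ.trans hkn) (f x)

lemma birkhoffSum_indicator_one_le_ncard (f : X → X) (G : Set X) (n : ℕ) (x : X) :
    birkhoffSum f (G.indicator (1 : X → ℝ)) n x ≤ (({k | f^[k] x ∈ G} ∩ Set.Iic n).ncard : ℝ) := by
  classical
  have hsum : birkhoffSum f (G.indicator (1 : X → ℝ)) n x =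
      ((Finset.range n).filter fun k => f^[k] x ∈ G).card := by
    simp [birkhoffSum, Set.indicator_apply]
  rw [hsum, ← Set.ncard_coe_finset]
  refine Nat.cast_le.2 (Set.ncard_le_ncard (fun k hk => ?_) ((Set.finite_Iic n).inter_of_right _))
  have hk' := Finset.mem_filter.1 (Finset.mem_coe.1 hk)
  exact ⟨hk'.2, (Finset.mem_range.1 hk'.1).le⟩

variable [MeasurableSpace X] {μ : Measure X}

lemma integrable_birkhoffSum (hf : MeasurePreserving f μ μ) (hg : Integrable g μ) (n : ℕ) :
    Integrable (birkhoffSum f g n) μ :=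
  integrable_finsetSum _ fun k _ => (hf.iterate k).integrable_comp_of_integrable hg

lemma integrable_partialSups {u : ℕ → X → ℝ} (hu : ∀ n, Integrable (u n) μ) (n : ℕ) :
    Integrable (partialSups u n) μ := by
  induction n with
  | zero => simpa using hu 0
  | succ n ih => rw [partialSups_add_one]; exact ih.sup (hu _)

lemma setIntegral_partialSups_birkhoffSum_pos_nonneg (hf : MeasurePreserving f μ μ)
    (hg : Integrable g μ) (n : ℕ) :
    0 ≤ ∫ x in {x | 0 < partialSups (birkhoffSum f g) n x}, g x ∂μ := by
  set M := partialSups (birkhoffSum f g) n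
  have hM : Integrable M μ := integrable_partialSups (integrable_birkhoffSum hf hg) n
  have hMf : Integrable (M ∘ f) μ := hf.integrable_comp_of_integrable hM
  have hM_nonneg : ∀ x, 0 ≤ M x := partialSups_birkhoffSum_nonneg f g n
  have hM_eq : ∫ x in {x | 0 < M x}, M x ∂μ = ∫ x, M x ∂μ :=
    setIntegral_eq_integral_of_forall_compl_eq_zero fun x hx =>
      le_antisymm (not_lt.1 hx) (hM_nonneg x)
  have hMf_le : ∫ x in {x | 0 < M x}, M (f x) ∂μ ≤ ∫ x, M x ∂μ :=
    calc ∫ x in {x | 0 < M x}, M (f x) ∂μ ≤ ∫ x, M (f x) ∂μ :=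
          setIntegral_le_integral hMf (Eventually.of_forall fun x => hM_nonneg (f x))
      _ = ∫ x, M x ∂μ := by
          rw [← integral_map hf.aemeasurable (hf.map_eq.symm ▸ hM.aestronglyMeasurable), hf.map_eq]
  calc (0 : ℝ) ≤ ∫ x in {x | 0 < M x}, (M x - M (f x)) ∂μ :=
        (sub_nonneg.2 (hMf_le.trans_eq hM_eq.symm)).trans_eq
          (integral_sub hM.integrableOn hMf.integrableOn).symm
    _ ≤ ∫ x in {x | 0 < M x}, g x ∂μ :=
        setIntegral_mono_on₀ (hM.sub hMf).integrableOn hg.integrableOn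
          (nullMeasurableSet_lt aemeasurable_const hM.aemeasurable)
          fun x hx => sub_le_iff_le_add.2 (partialSups_birkhoffSum_le_add hx)

lemma setIntegral_exists_birkhoffSum_pos_nonneg (hf : MeasurePreserving f μ μ)
    (hg : Integrable g μ) : 0 ≤ ∫ x in {x | ∃ n, 0 < birkhoffSum f g n x}, g x ∂μ := by
  have hunion : {x | ∃ n, 0 < birkhoffSum f g n x} =
      ⋃ n, {x | 0 < partialSups (birkhoffSum f g) n x} := by
    ext x
    simp only [Set.mem_iUnion, Set.mem_ofPred_eq, Pi.partialSups_apply]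
    constructor
    · rintro ⟨n, hn⟩
      exact ⟨n, hn.trans_le (le_partialSups (birkhoffSum f g · x) n)⟩
    · rintro ⟨n, hn⟩
      obtain ⟨k, -, hk⟩ := exists_partialSups_eq (birkhoffSum f g · x) n
      exact ⟨k, hk ▸ hn⟩
  rw [hunion]
  refine ge_of_tendsto' (tendsto_setIntegral_of_monotone₀ (fun n => ?_) (fun m n hmn x hx => ?_)
    hg.integrableOn) (setIntegral_partialSups_birkhoffSum_pos_nonneg hf hg)
  · exact nullMeasurableSet_lt aemeasurable_const
      (integrable_partialSups (integrable_birkhoffSum hf hg) n).aemeasurable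
  · exact lt_of_lt_of_le hx ((partialSups (birkhoffSum f g)).monotone hmn x)

lemma measure_eq_zero_of_lowerDensity_visits_le_zero [IsFiniteMeasure μ]
    (hf : MeasurePreserving f μ μ) {G : Set X} (hG : MeasurableSet G)
    (h : ∀ᵐ x ∂μ, x ∈ G → lowerDensity {n | f^[n] x ∈ G} ≤ 0) : μ G = 0 := by
  have hind : Integrable (G.indicator (1 : X → ℝ)) μ := (integrable_const (1 : ℝ)).indicator hG
  have hbound : ∀ δ > (0 : ℝ), μ.real G ≤ δ * μ.real Set.univ := by
    intro δ hδ
    set P := {x | ∃ n, 0 < birkhoffSum f ((fun _ => δ) - G.indicator 1) n x}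
    have hGP : μ.real G ≤ μ.real (G ∩ P) := by
      refine ENNReal.toReal_mono (measure_ne_top _ _) (measure_mono_ae ?_)
      filter_upwards [h] with x hx hxG
      obtain ⟨n, hn⟩ := exists_ncard_inter_Iic_lt_of_lowerDensity_lt ((hx hxG).trans_lt hδ)
      refine ⟨hxG, n, ?_⟩
      have hconst : birkhoffSum f (fun _ => δ) n x = δ * n := by simp [birkhoffSum, mul_comm]
      rw [birkhoffSum_sub, hconst, sub_pos]
      exact (birkhoffSum_indicator_one_le_ncard f G n x).trans_lt hn
    have hmax := setIntegral_exists_birkhoffSum_pos_nonneg hf ((integrable_const δ).sub hind)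
    have hint : ∫ x in P, ((fun _ => δ) - G.indicator 1 : X → ℝ) x ∂μ =
        δ * μ.real P - μ.real (G ∩ P) := by
      rw [integral_sub' (integrable_const _) hind.integrableOn, setIntegral_const,
        integral_indicator_one hG, measureReal_restrict_apply hG, smul_eq_mul, mul_comm]
    calc μ.real G ≤ μ.real (G ∩ P) := hGP
      _ ≤ δ * μ.real P := sub_nonneg.1 (hint ▸ hmax)
      _ ≤ δ * μ.real Set.univ := mul_le_mul_of_nonneg_left (measureReal_mono P.subset_univ) hδ.le
  have hlim : Tendsto (fun δ : ℝ => δ * μ.real Set.univ) (𝓝[>] 0) (𝓝 0) := by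
    simpa using ((continuous_mul_const (μ.real Set.univ)).tendsto 0).mono_left nhdsWithin_le_nhds
  exact (measureReal_eq_zero_iff).1 (le_antisymm
    (ge_of_tendsto hlim (eventually_mem_nhdsWithin.mono hbound)) measureReal_nonneg)

end MaximalErgodic

section Atoms

variable {Y : Type*} [MetricSpace Y] [MeasurableSpace Y] {ν : Measure Y} {c : ℝ≥0∞}

lemma measure_ball_lt_of_denseSeq [TopologicalSpace.SeparableSpace Y] [Nonempty Y] {r s : ℝ}
    (h : ∀ n, ν (ball (TopologicalSpace.denseSeq Y n) r) < c) (hs : s < r) (y : Y) :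
    ν (ball y s) < c := by
  obtain ⟨n, hn⟩ := (TopologicalSpace.denseRange_denseSeq Y).exists_dist_lt y (sub_pos.2 hs)
  exact (measure_mono (ball_subset (by linarith))).trans_lt (h n)

lemma exists_le_measure_singleton [CompactSpace Y] [OpensMeasurableSpace Y] [IsFiniteMeasure ν]
    (h : ∀ r > (0 : ℝ), ∃ y, c ≤ ν (ball y r)) : ∃ y, c ≤ ν {y} := by
  have : Nonempty Y := (h 1 one_pos).nonempty
  choose! y hy using h
  obtain ⟨r, -, hr_pos, hr_lim⟩ := exists_seq_strictAnti_tendsto (0 : ℝ)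
  obtain ⟨w, -, φ, hφ, hw⟩ := isCompact_univ.tendsto_subseq fun n => Set.mem_univ (y (r n))
  have hclosedBall : ∀ ε > (0 : ℝ), c ≤ ν (closedBall w ε) := by
    intro ε hε
    have hr := (hr_lim.comp hφ.tendsto_atTop).eventually (gt_mem_nhds (half_pos hε))
    have hd := hw.eventually (ball_mem_nhds w (half_pos hε))
    obtain ⟨n, hrn, hdn⟩ := (hr.and hd).exists
    refine (hy _ (hr_pos (φ n))).trans (measure_mono
      (ball_subset_closedBall.trans (closedBall_subset_closedBall' ?_)))
    exact (add_lt_add hrn hdn).le.trans_eq (add_halves ε)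
  have hlim : Tendsto (fun ε => ν (closedBall w ε)) (𝓝[>] 0) (𝓝 (ν {w})) := by
    refine ((tendsto_measure_cthickening_of_isClosed ⟨1, one_pos, measure_ne_top _ _⟩
      (isClosed_singleton (x := w))).mono_left nhdsWithin_le_nhds).congr' ?_
    filter_upwards [self_mem_nhdsWithin] with ε hε
    rw [Metric.cthickening_singleton w (le_of_lt hε)]
  exact ⟨w, ge_of_tendsto hlim (eventually_mem_nhdsWithin.mono hclosedBall)⟩

end Atoms

section Equivariance

variable {X Y : Type*} [MeasurableSpace X] [MeasurableSpace Y]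

/-- The skew product over the base map `T` with fibre maps `a x`. -/
def skewProduct (T : X → X) (a : X → Y → Y) (p : X × Y) : X × Y := (T p.1, a p.1 p.2)

lemma exists_kernel_compProd_eq {μ : Measure X} [SFinite μ] {m : Measure (X × Y)} [NeZero m]
    {ν : X → Measure Y} (hν : ∀ x, IsProbabilityMeasure (ν x))
    (hm : m = μ.bind fun x => (ν x).map (Prod.mk x)) :
    ∃ κ : Kernel X Y, IsMarkovKernel κ ∧ ν =ᵐ[μ] κ ∧ m = μ ⊗ₘ κ := by
  have hjoint : AEMeasurable (fun x => (ν x).map (Prod.mk x)) μ := by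
    -- `Measure.bind` of a family that is not almost everywhere measurable is the zero measure.
    refine AEMeasurable.of_map_ne_zero fun h => NeZero.ne m ?_
    rw [hm, Measure.bind, h, Measure.join_zero]
  have hν_eq : ν = fun x => ((ν x).map (Prod.mk x)).map Prod.snd := by
    ext1 x
    rw [Measure.map_map measurable_snd measurable_prodMk_left]
    exact Measure.map_id.symm
  have hν_meas : AEMeasurable ν μ := by
    rw [hν_eq]
    exact (Measure.measurable_map _ measurable_snd).comp_aemeasurable hjoint
  have hX : Nonempty X := by
    by_contra h
    rw [not_nonempty_iff] at h
    exact NeZero.ne m (Measure.eq_zero_of_isEmpty m)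
  obtain ⟨κ, hκ, hκ_prob, hνκ⟩ := hν_meas.exists_ae_eq_range_subset
    (t := {ρ | IsProbabilityMeasure ρ}) (Eventually.of_forall hν) ⟨_, hν hX.some⟩
  have : IsMarkovKernel ⟨κ, hκ⟩ := ⟨fun x => hκ_prob ⟨x, rfl⟩⟩
  refine ⟨⟨κ, hκ⟩, this, hνκ, ?_⟩
  ext s hs
  rw [hm, Measure.bind_apply hs hjoint, Measure.compProd_apply hs]
  refine lintegral_congr_ae (hνκ.mono fun x hx => ?_)
  simp only [Measure.map_apply measurable_prodMk_left hs, hx, Kernel.coe_mk]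

/-- The image of the kernel `κ` under the fibre maps `a x`; it is the zero kernel when `a` is not
jointly measurable. -/
noncomputable def fiberMap (κ : Kernel X Y) (a : X → Y → Y) : Kernel X Y :=
  (Kernel.id ×ₖ κ).map (Function.uncurry a)

variable {μ : Measure X} {κ : Kernel X Y} {T : X → X} {a : X → Y → Y}

instance [IsFiniteKernel κ] : IsFiniteKernel (fiberMap κ a) := by
  unfold fiberMap; infer_instance

lemma fiberMap_apply [IsSFiniteKernel κ] (ha : Measurable (Function.uncurry a)) (x : X) :
    fiberMap κ a x = (κ x).map (a x) := by
  rw [fiberMap, Kernel.map_apply _ ha, Kernel.prod_apply, Kernel.id_apply, Measure.dirac_prod,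
    Measure.map_map ha measurable_prodMk_left]
  rfl

lemma map_prodMap_compProd_comap [SFinite μ] [IsSFiniteKernel κ] (hT : MeasurePreserving T μ μ) :
    (μ ⊗ₘ κ.comap T hT.measurable).map (Prod.map T id) = μ ⊗ₘ κ := by
  ext s hs
  have hTid : Measurable (Prod.map T (id : Y → Y)) := hT.measurable.prodMap measurable_id
  rw [Measure.map_apply hTid hs, Measure.compProd_apply (hTid hs), Measure.compProd_apply hs]
  exact hT.lintegral_comp (Kernel.measurable_kernel_prodMk_left hs)

lemma map_prodMap_compProd_fiberMap [SFinite μ] [IsFiniteKernel κ] (hT : Measurable T)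
    (ha : Measurable (Function.uncurry a)) :
    (μ ⊗ₘ fiberMap κ a).map (Prod.map T id) = (μ ⊗ₘ κ).map (skewProduct T a) := by
  ext s hs
  have hTid : Measurable (Prod.map T (id : Y → Y)) := hT.prodMap measurable_id
  have hskew : Measurable (skewProduct T a) := (hT.comp measurable_fst).prodMk ha
  rw [Measure.map_apply hTid hs, Measure.map_apply hskew hs, Measure.compProd_apply (hTid hs),
    Measure.compProd_apply (hskew hs)]
  refine lintegral_congr fun x => ?_
  rw [fiberMap_apply ha, Measure.map_apply ha.of_uncurry_left (measurable_prodMk_left (hTid hs))]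
  rfl

lemma ae_eq_map_of_map_skewProduct_eq [MeasurableSpace.CountableOrCountablyGenerated X Y]
    [IsFiniteMeasure μ] [IsFiniteKernel κ] (hT : MeasurePreserving T μ μ)
    (hT_emb : MeasurableEmbedding T) (ha : Measurable (Function.uncurry a))
    (h : (μ ⊗ₘ κ).map (skewProduct T a) = μ ⊗ₘ κ) :
    ∀ᵐ x ∂μ, κ (T x) = (κ x).map (a x) := by
  have hTid : MeasurableEmbedding (Prod.map T (id : Y → Y)) := hT_emb.prodMap .id
  have hcompProd : μ ⊗ₘ κ.comap T hT.measurable = μ ⊗ₘ fiberMap κ a := by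
    rw [← hTid.comap_map (μ ⊗ₘ κ.comap T hT.measurable), map_prodMap_compProd_comap hT, ← h,
      ← map_prodMap_compProd_fiberMap hT.measurable ha, hTid.comap_map]
  filter_upwards [Kernel.ae_eq_of_compProd_eq hcompProd] with x hx
  rw [← fiberMap_apply ha, ← hx, Kernel.comap_apply]

end Equivariance

section ProjectiveLine

/-- The wedge product of two vectors of the plane: the determinant with columns `v` and `w`. -/
def wedge (v w : Fin 2 → ℝ) : ℝ := v 0 * w 1 - v 1 * w 0

variable {u v w : Fin 2 → ℝ}

lemma wedge_self (v : Fin 2 → ℝ) : wedge v v = 0 := by simp [wedge, mul_comm]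

lemma abs_wedge_comm (v w : Fin 2 → ℝ) : |wedge v w| = |wedge w v| := by
  rw [← abs_neg]; congr 1; simp only [wedge]; ring

lemma wedge_smul_smul (a b : ℝ) (v w : Fin 2 → ℝ) :
    wedge (a • v) (b • w) = a * b * wedge v w := by
  simp only [wedge, Pi.smul_apply, smul_eq_mul]; ring

lemma wedge_mulVec (M : Matrix (Fin 2) (Fin 2) ℝ) (v w : Fin 2 → ℝ) :
    wedge (M *ᵥ v) (M *ᵥ w) = M.det * wedge v w := by
  simp only [wedge, Matrix.mulVec, dotProduct, Fin.sum_univ_two, Matrix.det_fin_two]; ring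

lemma wedge_smul_cycle (u v w : Fin 2 → ℝ) :
    wedge v w • u = wedge u w • v + wedge v u • w := by
  ext i
  fin_cases i <;> simp [wedge] <;> ring

lemma abs_wedge_le (v w : Fin 2 → ℝ) : |wedge v w| ≤ ‖toLp 2 v‖ * ‖toLp 2 w‖ := by
  refine abs_le_of_sq_le_sq ?_ (by positivity)
  rw [mul_pow, EuclideanSpace.real_norm_sq_eq, EuclideanSpace.real_norm_sq_eq]
  simp only [Fin.sum_univ_two, wedge]
  nlinarith [sq_nonneg (v 0 * w 0 + v 1 * w 1)]

lemma exists_smul_eq_of_wedge_eq_zero (hw : w ≠ 0) (h : wedge v w = 0) : ∃ a : ℝ, a • w = v := by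
  have hww : w ⬝ᵥ w ≠ 0 := dotProduct_self_eq_zero.not.2 hw
  refine ⟨(v ⬝ᵥ w) / (w ⬝ᵥ w), ?_⟩
  rw [div_eq_inv_mul, mul_smul, inv_smul_eq_iff₀ hww]
  simp only [wedge] at h
  ext i
  fin_cases i <;> simp only [dotProduct, Fin.sum_univ_two, Fin.isValue, Fin.zero_eta, Fin.mk_one,
    Pi.smul_apply, smul_eq_mul]
  · linear_combination -w 1 * h
  · linear_combination w 0 * h

lemma abs_wedge_mul_norm_mulVec_le (M : Matrix (Fin 2) (Fin 2) ℝ) (u v w : Fin 2 → ℝ) :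
    |wedge v w| * ‖toLp 2 (M *ᵥ u)‖ ≤
      |wedge u w| * ‖toLp 2 (M *ᵥ v)‖ + |wedge v u| * ‖toLp 2 (M *ᵥ w)‖ := by
  have h := congrArg (fun z => toLp 2 (M *ᵥ z)) (wedge_smul_cycle u v w)
  simp only [Matrix.mulVec_add, Matrix.mulVec_smul, WithLp.toLp_add, WithLp.toLp_smul] at h
  calc |wedge v w| * ‖toLp 2 (M *ᵥ u)‖
      = ‖wedge u w • toLp 2 (M *ᵥ v) + wedge v u • toLp 2 (M *ᵥ w)‖ := by
        rw [← h, norm_smul, Real.norm_eq_abs]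
    _ ≤ |wedge u w| * ‖toLp 2 (M *ᵥ v)‖ + |wedge v u| * ‖toLp 2 (M *ᵥ w)‖ := by
        simpa only [norm_smul, Real.norm_eq_abs] using
          norm_add_le (wedge u w • toLp 2 (M *ᵥ v)) (wedge v u • toLp 2 (M *ᵥ w))

/-- The sine of the angle between two lines of the plane, the distance used on `Proj 2`. -/
noncomputable def sinAngle (E F : Proj 2) : ℝ :=
  |wedge E.rep F.rep| / (‖toLp 2 E.rep‖ * ‖toLp 2 F.rep‖)

lemma sinAngle_mk (hv : v ≠ 0) (hw : w ≠ 0) :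
    sinAngle (.mk ℝ v hv) (.mk ℝ w hw) = |wedge v w| / (‖toLp 2 v‖ * ‖toLp 2 w‖) := by
  obtain ⟨a, ha⟩ := Projectivization.exists_smul_eq_mk_rep ℝ v hv
  obtain ⟨b, hb⟩ := Projectivization.exists_smul_eq_mk_rep ℝ w hw
  have hab : |(a : ℝ)| * |(b : ℝ)| ≠ 0 := by simp
  rw [sinAngle, ← ha, ← hb, Units.smul_def, Units.smul_def, wedge_smul_smul, WithLp.toLp_smul,
    WithLp.toLp_smul, norm_smul, norm_smul, abs_mul, abs_mul, Real.norm_eq_abs, Real.norm_eq_abs,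
    mul_mul_mul_comm, mul_div_mul_left _ _ hab]

lemma norm_rep_pos {d : ℕ} (E : Proj d) : 0 < ‖toLp 2 E.rep‖ := by
  simpa using E.rep_nonzero

noncomputable instance : MetricSpace (Proj 2) where
  dist := sinAngle
  dist_self E := by simp [sinAngle, wedge_self]
  dist_comm E F := by simp only [sinAngle, abs_wedge_comm E.rep, mul_comm]
  dist_triangle E G F := by
    have hE := norm_rep_pos E
    have hF := norm_rep_pos F
    have hG := norm_rep_pos G
    have h := abs_wedge_mul_norm_mulVec_le 1 G.rep E.rep F.rep
    simp only [Matrix.one_mulVec] at h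
    simp only [sinAngle]
    field_simp
    linarith
  eq_of_dist_eq_zero {E F} h := by
    have hEF : wedge E.rep F.rep = 0 := by
      simpa [sinAngle, (norm_rep_pos E).ne', (norm_rep_pos F).ne'] using h
    rw [← E.mk_rep, ← F.mk_rep, Projectivization.mk_eq_mk_iff']
    exact exists_smul_eq_of_wedge_eq_zero F.rep_nonzero hEF

lemma dist_mk_mk (hv : v ≠ 0) (hw : w ≠ 0) :
    dist (Projectivization.mk ℝ v hv) (.mk ℝ w hw) =
      |wedge v w| / (‖toLp 2 v‖ * ‖toLp 2 w‖) := sinAngle_mk hv hw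

lemma continuous_projectivization_mk' :
    Continuous (Projectivization.mk' ℝ : {v : Fin 2 → ℝ // v ≠ 0} → Proj 2) := by
  refine continuous_iff_continuousAt.2 fun v => tendsto_iff_dist_tendsto_zero.2 ?_
  have hnum : Continuous fun w : Fin 2 → ℝ => |wedge w v| := by unfold wedge; fun_prop
  have hden : Continuous fun w : Fin 2 → ℝ => ‖toLp 2 w‖ * ‖toLp 2 v.1‖ := by fun_prop
  have hv : ‖toLp 2 v.1‖ * ‖toLp 2 v.1‖ ≠ 0 := by simpa using v.2
  have hlim := (hnum.continuousAt.div hden.continuousAt hv).tendsto.comp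
    continuous_subtype_val.continuousAt.tendsto
  simpa only [Function.comp_def, Pi.div_apply, wedge_self, abs_zero, zero_div,
    Projectivization.mk'_eq_mk, dist_mk_mk] using hlim

lemma mulVec_ne_zero {d : ℕ} (A : GL (Fin d) ℝ) {v : Fin d → ℝ} (hv : v ≠ 0) :
    A.val *ᵥ v ≠ 0 :=
  (map_ne_zero_iff (Matrix.toLin' A.val) (glInjective A)).2 hv

lemma projAction_mk {d : ℕ} (A : GL (Fin d) ℝ) {v : Fin d → ℝ} (hv : v ≠ 0) :
    projAction A (.mk ℝ v hv) = .mk ℝ (A.val *ᵥ v) (mulVec_ne_zero A hv) := rfl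

/-- The line spanned by a unit vector, used to see the projective line as a quotient of a compact
space. The norm is the supremum norm of `Fin 2 → ℝ`. -/
noncomputable def lineOfSphere (v : sphere (0 : Fin 2 → ℝ) 1) : Proj 2 :=
  .mk ℝ v.1 (ne_zero_of_mem_unit_sphere v)

lemma continuous_lineOfSphere : Continuous lineOfSphere :=
  continuous_projectivization_mk'.comp
    (continuous_subtype_val.subtype_mk fun v => ne_zero_of_mem_unit_sphere v)

lemma lineOfSphere_surjective : Function.Surjective lineOfSphere := by
  intro E
  have hE : ‖E.rep‖ ≠ 0 := norm_ne_zero_iff.2 E.rep_nonzero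
  refine ⟨⟨‖E.rep‖⁻¹ • E.rep, by simp [norm_smul, hE]⟩, ?_⟩
  conv_rhs => rw [← E.mk_rep]
  exact (Projectivization.mk_eq_mk_iff' ..).2 ⟨‖E.rep‖⁻¹, rfl⟩

instance : CompactSpace (Proj 2) := lineOfSphere_surjective.compactSpace continuous_lineOfSphere

instance : BorelSpace (Proj 2) := by
  have : PolishSpace {v : Fin 2 → ℝ // v ≠ 0} := isOpen_ne.polishSpace
  exact ⟨continuous_projectivization_mk'.map_eq_borel Quotient.mk_surjective⟩

lemma continuous_projAction (A : GL (Fin 2) ℝ) : Continuous (projAction A) := by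
  have hquot := continuous_lineOfSphere.isClosedMap.isQuotientMap continuous_lineOfSphere
    lineOfSphere_surjective
  refine hquot.continuous_iff.2 (continuous_projectivization_mk'.comp
    (Continuous.subtype_mk (f := fun v : sphere (0 : Fin 2 → ℝ) 1 => A.val *ᵥ v) ?_ _))
  fun_prop

lemma measurable_mulVec_right {X m n : Type*} [MeasurableSpace X] [Fintype n]
    {M : X → Matrix m n ℝ} (hM : Measurable M) (v : n → ℝ) : Measurable fun x => M x *ᵥ v := by
  refine measurable_pi_lambda _ fun i => Finset.measurable_sum _ fun j _ => ?_
  exact (measurable_pi_iff.1 (measurable_pi_iff.1 hM i) j).mul_const (v j)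

lemma measurable_projAction {X : Type*} [MeasurableSpace X] {A : X → GL (Fin 2) ℝ}
    (hA : Measurable fun x => (A x).val) :
    Measurable (Function.uncurry fun x => projAction (A x)) := by
  have hswap : Measurable (Function.uncurry fun (E : Proj 2) x => projAction (A x) E) := by
    refine measurable_uncurry_of_continuous_of_measurable
      (fun x => continuous_projAction (A x)) fun E => ?_
    rw [← E.mk_rep]
    exact continuous_projectivization_mk'.measurable.comp
      (measurable_mulVec_right hA E.rep).subtype_mk
  exact hswap.comp measurable_swap

end ProjectiveLine

section Contraction

/-- The factor by which the matrix `M` stretches the Euclidean length of vectors on the line `E`. -/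
noncomputable def stretch {d : ℕ} (M : Matrix (Fin d) (Fin d) ℝ) (E : Proj d) : ℝ :=
  ‖toLp 2 (M *ᵥ E.rep)‖ / ‖toLp 2 E.rep‖

lemma opNorm_nonneg {d : ℕ} (M : Matrix (Fin d) (Fin d) ℝ) : 0 ≤ opNorm M := norm_nonneg _

lemma stretch_nonneg {d : ℕ} (M : Matrix (Fin d) (Fin d) ℝ) (E : Proj d) : 0 ≤ stretch M E := by
  unfold stretch; positivity

lemma stretch_mk {d : ℕ} (M : Matrix (Fin d) (Fin d) ℝ) {v : Fin d → ℝ} (hv : v ≠ 0) :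
    stretch M (.mk ℝ v hv) = ‖toLp 2 (M *ᵥ v)‖ / ‖toLp 2 v‖ := by
  obtain ⟨a, ha⟩ := Projectivization.exists_smul_eq_mk_rep ℝ v hv
  have ha0 : ‖(a : ℝ)‖ ≠ 0 := by simp
  rw [stretch, ← ha, Units.smul_def, Matrix.mulVec_smul, WithLp.toLp_smul, WithLp.toLp_smul,
    norm_smul, norm_smul, mul_div_mul_left _ _ ha0]

lemma exists_lt_stretch_of_lt_opNorm {d : ℕ} {M : Matrix (Fin d) (Fin d) ℝ} {s : ℝ} (hs : 0 ≤ s)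
    (h : s < opNorm M) : ∃ E, s < stretch M E := by
  obtain ⟨x, hx, hsx⟩ := ContinuousLinearMap.exists_lt_apply_of_lt_opNorm _ h
  obtain ⟨u, rfl⟩ := WithLp.toLp_surjective 2 x
  replace hsx : s < ‖toLp 2 (M *ᵥ u)‖ := hsx
  have hu : u ≠ 0 := by
    rintro rfl
    exact hs.not_gt (by simpa using hsx)
  have hu_pos : 0 < ‖toLp 2 u‖ := by simpa using hu
  refine ⟨.mk ℝ u hu, ?_⟩
  rw [stretch_mk, lt_div_iff₀ hu_pos]
  exact (mul_le_of_le_one_right hs hx.le).trans_lt hsx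

lemma dist_le_one (E F : Proj 2) : dist E F ≤ 1 :=
  div_le_one_of_le₀ (abs_wedge_le _ _) (by positivity)

lemma dist_mul_stretch_le (M : Matrix (Fin 2) (Fin 2) ℝ) (E F G : Proj 2) :
    dist E F * stretch M G ≤ stretch M E + stretch M F := by
  induction E using Projectivization.ind with | h v hv
  induction F using Projectivization.ind with | h w hw
  induction G using Projectivization.ind with | h u hu
  have hv_pos : 0 < ‖toLp 2 v‖ := by simpa using hv
  have hw_pos : 0 < ‖toLp 2 w‖ := by simpa using hw
  have hu_pos : 0 < ‖toLp 2 u‖ := by simpa using hu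
  simp only [dist_mk_mk, stretch_mk]
  field_simp
  calc |wedge v w| * ‖toLp 2 (M *ᵥ u)‖
      ≤ |wedge u w| * ‖toLp 2 (M *ᵥ v)‖ + |wedge v u| * ‖toLp 2 (M *ᵥ w)‖ :=
        abs_wedge_mul_norm_mulVec_le M u v w
    _ ≤ (‖toLp 2 u‖ * ‖toLp 2 w‖) * ‖toLp 2 (M *ᵥ v)‖
        + (‖toLp 2 v‖ * ‖toLp 2 u‖) * ‖toLp 2 (M *ᵥ w)‖ := by
        gcongr <;> exact abs_wedge_le _ _
    _ = _ := by ring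

lemma dist_projAction_mul_stretch (A : GL (Fin 2) ℝ) (E F : Proj 2) :
    dist (projAction A E) (projAction A F) * (stretch A.val E * stretch A.val F) =
      |A.val.det| * dist E F := by
  induction E using Projectivization.ind with | h v hv
  induction F using Projectivization.ind with | h w hw
  have hv_norm : ‖toLp 2 (A.val *ᵥ v)‖ ≠ 0 := by
    simpa using mulVec_ne_zero A hv
  have hw_norm : ‖toLp 2 (A.val *ᵥ w)‖ ≠ 0 := by
    simpa using mulVec_ne_zero A hw
  simp only [projAction_mk, dist_mk_mk, stretch_mk, wedge_mulVec, abs_mul]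
  field_simp

lemma exists_subset_ball_of_dist_lt {Y : Type*} [PseudoMetricSpace Y] [Nonempty Y] {S : Set Y}
    {r : ℝ} (h : ∀ x ∈ S, ∀ y ∈ S, dist x y < r) : ∃ y, S ⊆ ball y r := by
  rcases S.eq_empty_or_nonempty with rfl | ⟨y, hy⟩
  · exact ⟨Classical.arbitrary Y, Set.empty_subset _⟩
  · exact ⟨y, fun x hx => h x hx y hy⟩

lemma exists_compl_ball_subset_preimage_projAction {A : GL (Fin 2) ℝ} {r : ℝ} (hr : 0 < r)
    (hA : 4 * |A.val.det| < r ^ 3 * opNorm A.val ^ 2) :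
    ∃ E₀ F₀, (ball E₀ r)ᶜ ⊆ projAction A ⁻¹' ball F₀ r := by
  set M := A.val
  obtain ⟨G, hG⟩ : ∃ G, √(4 * |M.det| / r ^ 3) < stretch M G := by
    refine exists_lt_stretch_of_lt_opNorm (Real.sqrt_nonneg _) ?_
    rw [Real.sqrt_lt (by positivity) (opNorm_nonneg M), div_lt_iff₀' (by positivity)]
    exact hA
  have hG_pos : 0 < stretch M G := (Real.sqrt_nonneg _).trans_lt hG
  have hdet : 4 * |M.det| < r ^ 3 * stretch M G ^ 2 := by
    rwa [Real.sqrt_lt' hG_pos, div_lt_iff₀' (by positivity)] at hG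
  set c := r * stretch M G / 2 with hc
  obtain ⟨E₀, hE₀⟩ : ∃ E₀, {E | stretch M E < c} ⊆ ball E₀ r := by
    refine exists_subset_ball_of_dist_lt fun E hE F hF => ?_
    have h := dist_mul_stretch_le M E F G
    refine lt_of_mul_lt_mul_right (h.trans_lt ?_) hG_pos.le
    calc stretch M E + stretch M F < c + c := add_lt_add hE hF
      _ = r * stretch M G := by ring
  obtain ⟨F₀, hF₀⟩ : ∃ F₀, projAction A '' {E | c ≤ stretch M E} ⊆ ball F₀ r := by
    refine exists_subset_ball_of_dist_lt ?_
    rintro _ ⟨E, hE, rfl⟩ _ ⟨F, hF, rfl⟩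
    have hc_pos : 0 < c := by positivity
    refine lt_of_mul_lt_mul_right (a := c * c) ?_ (by positivity)
    calc dist (projAction A E) (projAction A F) * (c * c)
        ≤ dist (projAction A E) (projAction A F) * (stretch M E * stretch M F) :=
          mul_le_mul_of_nonneg_left (mul_le_mul hE hF hc_pos.le (stretch_nonneg M E)) dist_nonneg
      _ = |M.det| * dist E F := dist_projAction_mul_stretch A E F
      _ ≤ |M.det| := mul_le_of_le_one_right (abs_nonneg _) (dist_le_one E F)
      _ < r * (c * c) := by rw [hc]; linarith
  exact ⟨E₀, F₀, fun E hE => hF₀ ⟨E, not_lt.1 fun hlt : stretch M E < c => hE (hE₀ hlt), rfl⟩⟩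

/-- The condition number `‖M‖ * ‖M⁻¹‖` of an invertible planar matrix, that is, the ratio of its
singular values. It is expressed through `‖M⁻¹‖ = ‖M‖ / |det M|`, which holds in dimension two. -/
noncomputable def conditionNumber (M : Matrix (Fin 2) (Fin 2) ℝ) : ℝ := opNorm M ^ 2 / |M.det|

lemma conditionNumber_le {A : GL (Fin 2) ℝ} {r : ℝ} (hr : 0 < r) {ν : Measure (Proj 2)}
    [IsProbabilityMeasure ν] (hν : ∀ E, ν (ball E r) < 1 / 2)
    (hν_map : ∀ E, ν.map (projAction A) (ball E r) < 1 / 2) :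
    conditionNumber A.val ≤ 4 / r ^ 3 := by
  have hdet : 0 < |A.val.det| := abs_pos.2 A.det_ne_zero
  by_contra! hlt
  rw [conditionNumber, div_lt_div_iff₀ (by positivity) hdet, mul_comm _ (r ^ 3)] at hlt
  obtain ⟨E₀, F₀, hsub⟩ := exists_compl_ball_subset_preimage_projAction hr hlt
  refine lt_irrefl (1 : ℝ≥0∞) ?_
  calc (1 : ℝ≥0∞) = ν (ball E₀ r) + ν (ball E₀ r)ᶜ := by
        rw [measure_add_measure_compl measurableSet_ball, measure_univ]
    _ ≤ ν (ball E₀ r) + ν.map (projAction A) (ball F₀ r) := by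
        rw [Measure.map_apply (continuous_projAction A).measurable measurableSet_ball]
        gcongr
    _ < 1 / 2 + 1 / 2 := ENNReal.add_lt_add (hν E₀) (hν_map F₀)
    _ = 1 := ENNReal.add_halves 1

end Contraction

section Cocycle

lemma projAction_one {d : ℕ} : projAction (1 : GL (Fin d) ℝ) = id := by
  funext E
  induction E using Projectivization.ind with | h v hv
  simp [projAction_mk]

lemma projAction_mul {d : ℕ} (A B : GL (Fin d) ℝ) :
    projAction (A * B) = projAction A ∘ projAction B := by
  funext E
  induction E using Projectivization.ind with | h v hv
  simp [projAction_mk]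

lemma abs_det_cocycleIter {X : Type*} {d : ℕ} {f : X → X} {A : X → GL (Fin d) ℝ}
    (hA : ∀ x, |(A x).val.det| = 1) (n : ℕ) (x : X) : |(cocycleIter f A n x).val.det| = 1 := by
  induction n generalizing x with
  | zero => simp [cocycleIter]
  | succ n ih => simp [cocycleIter, Matrix.det_mul, abs_mul, ih, hA]

lemma ConvergesEssentiallyToInfinity.conditionNumber {M : ℕ → Matrix (Fin 2) (Fin 2) ℝ}
    (h : ConvergesEssentiallyToInfinity fun n => opNorm (M n)) (hM : ∀ n, |(M n).det| = 1) :
    ConvergesEssentiallyToInfinity fun n => conditionNumber (M n) := by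
  simpa only [_root_.conditionNumber, hM, div_one] using h.sq fun n => opNorm_nonneg (M n)

variable {X : Type*} [MeasurableSpace X] {μ : Measure X} {f : X → X} {A : X → GL (Fin 2) ℝ}

lemma ae_eq_map_projAction_cocycleIter (hf : Measure.QuasiMeasurePreserving f μ μ)
    {κ : X → Measure (Proj 2)} (hκ : ∀ᵐ x ∂μ, κ (f x) = (κ x).map (projAction (A x))) (n : ℕ) :
    ∀ᵐ x ∂μ, κ (f^[n] x) = (κ x).map (projAction (cocycleIter f A n x)) := by
  induction n with
  | zero => simp [cocycleIter, projAction_one]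
  | succ n ih =>
    filter_upwards [hf.ae ih, hκ] with x hx hx'
    rw [Function.iterate_succ_apply, hx, hx', Measure.map_map
      (continuous_projAction _).measurable (continuous_projAction _).measurable,
      cocycleIter, projAction_mul]

variable [IsFiniteMeasure μ] {κ : Kernel X (Proj 2)} [IsMarkovKernel κ]

lemma ae_exists_half_le_measure_ball (hf : MeasurePreserving f μ μ)
    (hκ : ∀ᵐ x ∂μ, κ (f x) = (κ x).map (projAction (A x)))
    (hA : ∀ᵐ x ∂μ, ConvergesEssentiallyToInfinity fun n =>
      conditionNumber (cocycleIter f A n x).val) {r : ℝ} (hr : 0 < r) :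
    ∀ᵐ x ∂μ, ∃ E, 1 / 2 ≤ κ x (ball E r) := by
  set G := {x | ∀ n, κ x (ball (TopologicalSpace.denseSeq (Proj 2) n) r) < 1 / 2}
  have hG_meas : MeasurableSet G := measurableSet_setOfPred.2 <| .forall fun n =>
    measurableSet_setOfPred.1 <|
      measurableSet_lt (κ.measurable_coe measurableSet_ball) measurable_const
  have hG_ball : ∀ {x}, x ∈ G → ∀ E, κ x (ball E (r / 2)) < 1 / 2 := fun hx =>
    measure_ball_lt_of_denseSeq hx (half_lt_self hr)
  suffices hG : μ G = 0 by
    filter_upwards [measure_eq_zero_iff_ae_notMem.1 hG] with x hx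
    by_contra! hlt
    exact hx fun n => hlt _
  refine measure_eq_zero_of_lowerDensity_visits_le_zero hf hG_meas ?_
  filter_upwards [ae_all_iff.2 (ae_eq_map_projAction_cocycleIter hf.quasiMeasurePreserving hκ), hA]
    with x hκx hAx hxG
  have hvisits : {n | f^[n] x ∈ G} ⊆
      {n | conditionNumber (cocycleIter f A n x).val ≤ 4 / (r / 2) ^ 3} := fun n hn =>
    conditionNumber_le (half_pos hr) (hG_ball hxG) (hκx n ▸ hG_ball hn)
  exact (lowerDensity_mono hvisits).trans_eq (hAx _ (by positivity))

lemma ae_exists_half_le_measure_singleton (hf : MeasurePreserving f μ μ)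
    (hκ : ∀ᵐ x ∂μ, κ (f x) = (κ x).map (projAction (A x)))
    (hA : ∀ᵐ x ∂μ, ConvergesEssentiallyToInfinity fun n =>
      conditionNumber (cocycleIter f A n x).val) :
    ∀ᵐ x ∂μ, ∃ E, 1 / 2 ≤ κ x {E} := by
  have hball : ∀ᵐ x ∂μ, ∀ k : ℕ, ∃ E, 1 / 2 ≤ κ x (ball E (1 / (k + 1))) :=
    ae_all_iff.2 fun k => ae_exists_half_le_measure_ball hf hκ hA Nat.one_div_pos_of_nat
  filter_upwards [hball] with x hx
  refine exists_le_measure_singleton fun r hr => ?_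
  obtain ⟨k, hk⟩ := exists_nat_one_div_lt hr
  obtain ⟨E, hE⟩ := hx k
  exact ⟨E, hE.trans (measure_mono (ball_subset_ball hk.le))⟩

end Cocycle

theorem stmt5_general {X : Type*} [MeasurableSpace X] {μ : Measure X} [IsFiniteMeasure μ]
    {f : X → X} (hf : MeasurePreserving f μ μ) (hf_emb : MeasurableEmbedding f)
    {A : X → GL (Fin 2) ℝ} (hA : Measurable fun x => (A x).val)
    (hunb : ∀ᵐ x ∂μ, ConvergesEssentiallyToInfinity fun n =>
      conditionNumber (cocycleIter f A n x).val)
    {μhat : Measure (X × Proj 2)} [NeZero μhat]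
    (hinv : μhat.map (skewProduct f fun x => projAction (A x)) = μhat)
    {ν : X → Measure (Proj 2)} (hν : ∀ x, IsProbabilityMeasure (ν x))
    (hdis : μhat = μ.bind fun x => (ν x).map (Prod.mk x)) :
    ∀ᵐ x ∂μ, (1 : ℝ≥0∞) / 2 ≤ ⨆ E : Proj 2, ν x {E} := by
  obtain ⟨κ, hκ_markov, hνκ, rfl⟩ := exists_kernel_compProd_eq hν hdis
  have hκ := ae_eq_map_of_map_skewProduct_eq hf hf_emb (measurable_projAction hA) hinv
  filter_upwards [hνκ, ae_exists_half_le_measure_singleton hf hκ hunb] with x hνx ⟨E, hE⟩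
  rw [hνx]
  exact hE.trans (le_iSup (fun E => κ x {E}) E)

/-- For an essentially unbounded `SL±(2)`-valued cocycle over an ergodic
invertible transformation, the disintegration of any invariant probability measure on
`X × ℙ(ℝ²)` has an atom of mass at least `1/2` almost everywhere. -/
theorem stmt5
    {X : Type*} [MeasurableSpace X] [StandardBorelSpace X]
    (μ : Measure X) [IsProbabilityMeasure μ]
    (f : X → X) (hbij : Function.Bijective f) (herg : Ergodic f μ)
    (A : X → GL (Fin 2) ℝ)
    (hA : Measurable fun x => ((A x : Matrix (Fin 2) (Fin 2) ℝ)))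
    (hdet : ∀ x, (A x : Matrix (Fin 2) (Fin 2) ℝ).det = 1 ∨
                 (A x : Matrix (Fin 2) (Fin 2) ℝ).det = -1)
    (hunb : ∀ᵐ x ∂μ, ConvergesEssentiallyToInfinity fun n =>
        opNorm ((cocycleIter f A n x : GL (Fin 2) ℝ) : Matrix (Fin 2) (Fin 2) ℝ))
    (μhat : Measure (X × Proj 2)) [IsProbabilityMeasure μhat]
    (hproj : μhat.map Prod.fst = μ)
    (hinv : μhat.map (fun q : X × Proj 2 => (f q.1, projAction (A q.1) q.2)) = μhat)
    (ν : X → Measure (Proj 2)) (hνp : ∀ x, IsProbabilityMeasure (ν x))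
    (hdis : μhat = μ.bind fun x => (ν x).map fun z => (x, z)) :
    ∀ᵐ x ∂μ, (1 : ℝ≥0∞) / 2 ≤ ⨆ E : Proj 2, ν x {E} := by
  exact stmt5_general herg.toMeasurePreserving
    (herg.measurable.measurableEmbedding hbij.injective) hA (hunb.mono fun x hx =>
      hx.conditionNumber fun n => abs_det_cocycleIter (fun x => (abs_eq one_pos.le).2 (hdet x)) n x)
    hinv hνp hdis
end

section
/- Let (f̄,A) be an essentially unbounded random GL(2,ℝ)-valued cocycle. Then there is a random cocycle (f̄,B) cohomologous to (f̄,A) such that every (f̄,B)-invariant probability measure μ̂ on X × ℙ(ℝ²) is a product measure μ̂ = μ × ν, where ν is a probability measure on ℙ(ℝ²). -/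
open MeasureTheory Filter
open scoped ENNReal

/-- `Pr` is the two-sided Bernoulli product measure `p^ℤ` on `ℤ → Y`: the measure of
every cylinder is the corresponding product of `p`-measures. -/
def IsBernoulli {Y : Type*} [MeasurableSpace Y] (p : Measure Y)
    (Pr : Measure (ℤ → Y)) : Prop :=
  ∀ (s : Finset ℤ) (t : ℤ → Set Y), (∀ i ∈ s, MeasurableSet (t i)) →
    Pr {ω | ∀ i ∈ s, ω i ∈ t i} = ∏ i ∈ s, p (t i)

open Topology TopologicalSpace ProbabilityTheory

/-!
Normalized matrices of `GL(2,ℝ)` accumulate only at invertible matrices and at matrices of rank one,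
and the latter send the projective line to a point, off their kernel. As the action on the line is
two-transitive, two sequences of probability measures on it that lie in each other's orbit closure
then lie in the same orbit: the orbit space is T0 and second countable, so ergodicity makes every
invariant map into it constant.

Up to null sets, the disintegrations of the invariant measures of `A` are the measurable families
`x ↦ u x` of probability measures with `u (f_i x) = A_i(x) • u x`. Almost everywhere, a dense
sequence of them takes its values in a single orbit `GL(2,ℝ) • z₀`, and a measurable section of
`g ↦ g • z₀` gives `P` such that each `P(x)⁻¹ • u x` is almost everywhere constant: first for the
sequence, then, passing to limits, for every equivariant family.
-/

section MeasurableSection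

variable {E Z : Type*} [TopologicalSpace E] [TopologicalSpace Z] [T2Space Z] [MeasurableSpace Z]
  [OpensMeasurableSpace Z] {Ψ : E → Z}

lemma measurable_sInf_image_fiber [CompactSpace E] (hΨ : Continuous Ψ) {h : E → ℝ}
    (hh : Continuous h) : Measurable fun z => sInf (h '' (Ψ ⁻¹' {z})) := by
  refine measurable_of_Iic fun t => ?_
  have fiber_compact (z : Z) : IsCompact (h '' (Ψ ⁻¹' {z})) :=
    (isClosed_singleton.preimage hΨ).isCompact.image hh
  have sublevel_eq : (fun z => sInf (h '' (Ψ ⁻¹' {z}))) ⁻¹' Set.Iic t =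
      Ψ '' (h ⁻¹' Set.Iic t) ∪ ((Set.range Ψ)ᶜ ∩ {_z | 0 ≤ t}) := by
    ext z
    rcases (Ψ ⁻¹' {z}).eq_empty_or_nonempty with hz | hz
    · have hz' (e : E) : Ψ e ≠ z := fun he => hz.subset he
      simp [hz, hz']
    · have hmem := (fiber_compact z).sInf_mem (hz.image h)
      have hrange : z ∈ Set.range Ψ := hz
      simp only [Set.mem_preimage, Set.mem_Iic, Set.mem_union, Set.mem_inter_iff,
        Set.mem_compl_iff, hrange, not_true, false_and, or_false]
      constructor
      · obtain ⟨e, he, heq⟩ := hmem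
        exact fun hle => ⟨e, heq.trans_le hle, he⟩
      · rintro ⟨e, hle, he⟩
        exact (csInf_le (fiber_compact z).bddBelow ⟨e, he, rfl⟩).trans hle
  rw [sublevel_eq]
  exact ((isClosed_Iic.preimage hh).isCompact.image hΨ).measurableSet.union
    ((isCompact_range hΨ).measurableSet.compl.inter (.const _))

variable [MeasurableSpace E] [BorelSpace E]

lemma exists_measurable_section_of_continuous_injective [CompactSpace E] [Nonempty E] {h : E → ℝ}
    (hh : Continuous h) (hinj : Function.Injective h) (hΨ : Continuous Ψ) :
    ∃ s : Z → E, Measurable s ∧ ∀ e, Ψ (s (Ψ e)) = Ψ e := by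
  obtain ⟨r, hr, hrh⟩ := (hh.isClosedEmbedding hinj).measurableEmbedding.exists_measurable_extend
    measurable_id fun _ => ‹Nonempty E›
  refine ⟨fun z => r (sInf (h '' (Ψ ⁻¹' {z}))), hr.comp (measurable_sInf_image_fiber hΨ hh),
    fun e => ?_⟩
  obtain ⟨e', he', heq⟩ := ((isClosed_singleton.preimage hΨ).isCompact.image hh).sInf_mem
    (Set.Nonempty.image h ⟨e, rfl⟩)
  change Ψ (r (sInf (h '' (Ψ ⁻¹' {Ψ e})))) = Ψ e
  rw [← heq, show r (h e') = e' from congrFun hrh e']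
  exact he'

lemma exists_measurable_section_of_compactSpace [CompactSpace E] [MetrizableSpace E] [Nonempty E]
    (hΨ : Continuous Ψ) : ∃ s : Z → E, Measurable s ∧ ∀ e, Ψ (s (Ψ e)) = Ψ e := by
  let _ := metrizableSpaceMetric E
  obtain ⟨c, hc, hcs⟩ := exists_nat_bool_continuous_surjective_of_compact E
  -- On a closed subset of the line, the least point of a fiber is a measurable choice.
  let π : cantorSet → E := c ∘ cantorSetHomeomorphNatToBool
  have hπ : Continuous π := hc.comp cantorSetHomeomorphNatToBool.continuous
  have hπs : Function.Surjective π := hcs.comp cantorSetHomeomorphNatToBool.surjective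
  have : CompactSpace cantorSet := isCompact_iff_compactSpace.1 isCompact_cantorSet
  have : Nonempty cantorSet := hπs.nonempty
  obtain ⟨s, hs, hsΨ⟩ := exists_measurable_section_of_continuous_injective
    continuous_subtype_val Subtype.val_injective (hΨ.comp hπ)
  exact ⟨π ∘ s, hπ.measurable.comp hs, hπs.forall.2 hsΨ⟩

lemma exists_measurable_section [SigmaCompactSpace E] [MetrizableSpace E] [Nonempty E]
    (hΨ : Continuous Ψ) : ∃ s : Z → E, Measurable s ∧ ∀ e, Ψ (s (Ψ e)) = Ψ e := by
  classical
  let K := compactCovering E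
  have hK (n : ℕ) : IsCompact (K n) := isCompact_compactCovering E n
  have section_on (n : ℕ) : ∃ s : Z → E, Measurable s ∧ ∀ z ∈ Ψ '' K n, Ψ (s z) = z := by
    rcases (K n).eq_empty_or_nonempty with hn | hn
    · exact ⟨_, measurable_const (a := Classical.arbitrary E), by simp [hn]⟩
    · have := isCompact_iff_compactSpace.1 (hK n)
      have := hn.to_subtype
      obtain ⟨s, hs, hsΨ⟩ := exists_measurable_section_of_compactSpace
        (hΨ.comp (continuous_subtype_val : Continuous ((↑) : K n → E)))
      refine ⟨fun z => s z, measurable_subtype_coe.comp hs, ?_⟩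
      rintro _ ⟨e, he, rfl⟩
      exact hsΨ ⟨e, he⟩
  choose s hs hsΨ using section_on
  have hcover (z : Z) : ∃ n, z ∈ Set.range Ψ → z ∈ Ψ '' K n := by
    by_cases hz : z ∈ Set.range Ψ
    · obtain ⟨e, rfl⟩ := hz
      obtain ⟨n, hn⟩ := exists_mem_compactCovering e
      exact ⟨n, fun _ => ⟨e, hn, rfl⟩⟩
    · exact ⟨0, fun h => (hz h).elim⟩
  have hrange : MeasurableSet (Set.range Ψ) := by
    rw [← Set.image_univ, ← iUnion_compactCovering E, Set.image_iUnion]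
    exact .iUnion fun n => ((hK n).image hΨ).measurableSet
  refine ⟨fun z => s (Nat.find (hcover z)) z,
    .find hs (fun n => hrange.imp ((hK n).image hΨ).measurableSet) hcover, fun e => ?_⟩
  exact hsΨ _ _ (Nat.find_spec (hcover (Ψ e)) ⟨e, rfl⟩)

end MeasurableSection

section AlmostSureDensity

variable {X : Type*} [MeasurableSpace X] [MeasurableSpace.CountablyGenerated X] {μ : Measure X}
  [IsFiniteMeasure μ]

lemma exists_seq_forall_exists_ae_tendsto_Lp {E ι : Type*} [NormedAddCommGroup E]
    [SecondCountableTopology E] [Nonempty ι] (v : ι → Lp E 1 μ) :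
    ∃ e : ℕ → ι, ∀ i, ∃ s : ℕ → ℕ, ∀ᵐ x ∂μ,
      Tendsto (fun n => v (e (s n)) x) atTop (𝓝 (v i x)) := by
  have : Fact ((1 : ℝ≥0∞) ≠ ∞) := ⟨ENNReal.one_ne_top⟩
  have hne : Nonempty (Set.range v) := (Set.range_nonempty v).to_subtype
  choose e he using fun n => (denseSeq (Set.range v) n).2
  refine ⟨e, fun i => ?_⟩
  obtain ⟨w, hw, hlim⟩ := mem_closure_iff_seq_limit.1
    (denseRange_denseSeq (Set.range v) ⟨v i, i, rfl⟩)
  choose s hs using hw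
  have hlim' : Tendsto (fun n => v (e (s n))) atTop (𝓝 (v i)) := by
    simp only [he, hs]
    exact (continuous_subtype_val.tendsto _).comp hlim
  obtain ⟨t, -, ht⟩ := (tendstoInMeasure_of_tendsto_Lp hlim').exists_seq_tendsto_ae
  exact ⟨s ∘ t, ht⟩

lemma exists_seq_forall_exists_ae_tendsto {M : Type*} [TopologicalSpace M] [CompactSpace M]
    [MetrizableSpace M] [MeasurableSpace M] [OpensMeasurableSpace M] {S : Set (X → M)}
    (hS : S.Nonempty) (hm : ∀ u ∈ S, Measurable u) :
    ∃ e : ℕ → X → M, (∀ n, e n ∈ S) ∧ ∀ u ∈ S, ∃ s : ℕ → ℕ, ∀ᵐ x ∂μ,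
      Tendsto (fun n => e (s n) x) atTop (𝓝 (u x)) := by
  let _ := metrizableSpaceMetric M
  have := hS.to_subtype
  let j : M → C(M, ℝ) := ContinuousMap.curry ⟨fun q : M × M => dist q.1 q.2, continuous_dist⟩
  have hj : Continuous j := ContinuousMap.continuous _
  have hjinj : Function.Injective j := fun a b hab =>
    dist_eq_zero.1 (by simpa [j] using (DFunLike.congr_fun hab b))
  obtain ⟨C, hC⟩ := (isCompact_range hj).isBounded.exists_norm_le
  have hL (u : S) : MemLp (j ∘ u.1) 1 μ :=
    .of_bound (hj.comp_aestronglyMeasurable (hm u u.2).aestronglyMeasurable) C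
      (ae_of_all _ fun x => hC _ ⟨u.1 x, rfl⟩)
  obtain ⟨e, he⟩ := exists_seq_forall_exists_ae_tendsto_Lp fun u => (hL u).toLp
  refine ⟨fun n => e n, fun n => (e n).2, fun u hu => ?_⟩
  obtain ⟨s, hs⟩ := he ⟨u, hu⟩
  refine ⟨s, ?_⟩
  filter_upwards [hs, (hL ⟨u, hu⟩).coeFn_toLp, ae_all_iff.2 fun n => (hL (e n)).coeFn_toLp]
    with x hx hux hex
  simp only [hux, hex] at hx
  exact (hj.isClosedEmbedding hjinj).isInducing.tendsto_nhds_iff.2 hx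

end AlmostSureDensity

section EquivariantMaps

variable {X Y G M : Type*} [MeasurableSpace X] [MeasurableSpace Y] {μ : Measure X} {p : Measure Y}
  {f : Y → X → X}

lemma IsBernoulli.map_eval_zero {Pr : Measure (ℤ → Y)} (hPr : IsBernoulli p Pr) :
    Pr.map (fun ω => ω 0) = p := by
  ext s hs
  rw [Measure.map_apply (measurable_pi_apply 0) hs]
  have h : Pr {ω | ω 0 ∈ s} = p s := by simpa using hPr {0} (fun _ => s) fun _ _ => hs
  exact h

lemma ae_eq_const_of_ergodic_fbar [IsProbabilityMeasure μ] {Pr : Measure (ℤ → Y)}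
    [IsProbabilityMeasure Pr] (hPr : IsBernoulli p Pr)
    (hf : Measurable fun q : Y × X => f q.1 q.2) (herg : Ergodic (fbar f) (Pr.prod μ))
    {Q : Type*} [MeasurableSpace Q] [MeasurableSpace.CountablySeparated Q] {u : X → Q}
    (hu : Measurable u) (hinv : ∀ᵐ i ∂p, ∀ᵐ x ∂μ, u (f i x) = u x) :
    ∃ c, ∀ᵐ x ∂μ, u x = c := by
  obtain ⟨φ, hφ, hφinj⟩ :=
    MeasurableSpace.measurable_injection_nat_bool_of_countablySeparated Q
  have hev : Measurable fun ω : ℤ → Y => ω 0 := measurable_pi_apply 0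
  have hinv_Pr : ∀ᵐ ω ∂Pr, ∀ᵐ x ∂μ, φ (u (f (ω 0) x)) = φ (u x) := by
    rw [← hPr.map_eval_zero] at hinv
    filter_upwards [ae_of_ae_map hev.aemeasurable hinv] with ω hω
    filter_upwards [hω] with x hx using congrArg φ hx
  have hfbar : Measurable fun q : (ℤ → Y) × X => f (q.1 0) q.2 :=
    hf.comp ((hev.comp measurable_fst).prodMk measurable_snd)
  have hinv_prod : ∀ᵐ q ∂(Pr.prod μ), φ (u (f (q.1 0) q.2)) = φ (u q.2) :=
    (Measure.ae_prod_iff_ae_ae (measurableSet_eq_fun (hφ.comp (hu.comp hfbar))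
      (hφ.comp (hu.comp measurable_snd)))).2 hinv_Pr
  have : Nonempty Q := μ.nonempty_of_neZero.map u
  obtain ⟨c, hc⟩ := herg.ae_eq_const_of_ae_eq_comp₀ (g := u ∘ Prod.snd)
    (hu.comp measurable_snd).nullMeasurable (hinv_prod.mono fun q hq => hφinj hq)
  obtain ⟨_, hω⟩ := (Measure.ae_ae_of_ae_prod hc).exists
  exact ⟨c, hω⟩

/-- A map `u : X → M` is equivariant under the random cocycle `A` over `f` when
`u (f_i x) = A_i(x) • u x` almost surely, that is, when its graph is invariant under almost every
`(x, m) ↦ (f_i x, A_i(x) • m)` up to a `μ`-null set. -/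
def IsEquivariant [SMul G M] (μ : Measure X) (p : Measure Y) (f : Y → X → X) (A : Y → X → G)
    (u : X → M) : Prop :=
  ∀ᵐ i ∂p, ∀ᵐ x ∂μ, u (f i x) = A i x • u x

lemma exists_measurable_ae_eq_smul_of_ae_mem_orbit {Z : Type*} [TopologicalSpace G]
    [SigmaCompactSpace G] [MetrizableSpace G] [MeasurableSpace G] [BorelSpace G]
    [TopologicalSpace Z] [T2Space Z] [MeasurableSpace Z] [OpensMeasurableSpace Z] [Monoid G]
    [MulAction G Z] {z₀ : Z} (hcont : Continuous fun g : G => g • z₀) {u : X → Z}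
    (hu : Measurable u) (horb : ∀ᵐ x ∂μ, u x ∈ MulAction.orbit G z₀) :
    ∃ P : X → G, Measurable P ∧ ∀ᵐ x ∂μ, u x = P x • z₀ := by
  obtain ⟨s, hs, hsec⟩ := exists_measurable_section hcont
  refine ⟨s ∘ u, hs.comp hu, ?_⟩
  filter_upwards [horb] with x ⟨g, hg⟩
  simpa only [Function.comp_apply, ← hg] using (hsec g).symm

variable [Group G] {A : Y → X → G} [IsProbabilityMeasure μ] {Pr : Measure (ℤ → Y)}
  [IsProbabilityMeasure Pr]

lemma IsEquivariant.exists_ae_mem_orbit (hPr : IsBernoulli p Pr)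
    (hf : Measurable fun q : Y × X => f q.1 q.2) (herg : Ergodic (fbar f) (Pr.prod μ))
    {Z : Type*} [TopologicalSpace Z] [SecondCountableTopology Z] [MeasurableSpace Z]
    [OpensMeasurableSpace Z] [MulAction G Z] [ContinuousConstSMul G Z]
    [T0Space (MulAction.orbitRel.Quotient G Z)] {u : X → Z} (hu : Measurable u)
    (hequiv : IsEquivariant μ p f A u) :
    ∃ z₀, ∀ᵐ x ∂μ, u x ∈ MulAction.orbit G z₀ := by
  let π : Z → MulAction.orbitRel.Quotient G Z := Quotient.mk _
  have hπ : IsOpenQuotientMap π :=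
    ⟨Quotient.mk_surjective, continuous_quotient_mk', isOpenMap_quotient_mk'_mul⟩
  have : SecondCountableTopology (MulAction.orbitRel.Quotient G Z) :=
    hπ.isQuotientMap.secondCountableTopology hπ.isOpenMap
  borelize (MulAction.orbitRel.Quotient G Z)
  obtain ⟨c, hc⟩ := ae_eq_const_of_ergodic_fbar hPr hf herg (hπ.continuous.measurable.comp hu) <| by
    filter_upwards [hequiv] with i hi
    filter_upwards [hi] with x hx
    exact Quotient.sound ⟨A i x, hx.symm⟩
  obtain ⟨z₀, rfl⟩ := hπ.surjective c
  exact ⟨z₀, hc.mono fun x hx => Quotient.exact hx⟩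

theorem exists_measurable_forall_isEquivariant_ae_eq_smul
    [MeasurableSpace.CountablyGenerated X] (hPr : IsBernoulli p Pr)
    (hf : Measurable fun q : Y × X => f q.1 q.2) (herg : Ergodic (fbar f) (Pr.prod μ))
    (A : Y → X → G) [TopologicalSpace G] [SigmaCompactSpace G] [MetrizableSpace G]
    [MeasurableSpace G] [BorelSpace G] [TopologicalSpace M] [CompactSpace M] [MetrizableSpace M]
    [MeasurableSpace M] [OpensMeasurableSpace M] [MulAction G M] [ContinuousSMul G M]
    [T0Space (MulAction.orbitRel.Quotient G (ℕ → M))] :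
    ∃ P : X → G, Measurable P ∧ ∀ u : X → M, Measurable u → IsEquivariant μ p f A u →
      ∃ m, ∀ᵐ x ∂μ, u x = P x • m := by
  rcases {u : X → M | Measurable u ∧ IsEquivariant μ p f A u}.eq_empty_or_nonempty with hS | hS
  · exact ⟨1, measurable_const, fun u hu hequiv => (hS.subset ⟨hu, hequiv⟩).elim⟩
  obtain ⟨e, heS, hdense⟩ := exists_seq_forall_exists_ae_tendsto (μ := μ) hS fun u hu => hu.1
  have he : Measurable fun x k => e k x := measurable_pi_lambda _ fun k => (heS k).1
  have hequiv : IsEquivariant μ p f A fun x k => e k x := by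
    filter_upwards [ae_all_iff.2 fun k => (heS k).2] with i hi
    filter_upwards [ae_all_iff.2 hi] with x hx using funext hx
  obtain ⟨z₀, hz₀⟩ := hequiv.exists_ae_mem_orbit hPr hf herg he
  obtain ⟨P, hP, hPz⟩ := exists_measurable_ae_eq_smul_of_ae_mem_orbit
    (continuous_id.smul continuous_const) he hz₀
  refine ⟨P, hP, fun u hu huequiv => ?_⟩
  obtain ⟨s, hs⟩ := hdense u ⟨hu, huequiv⟩
  have hlim : ∀ᵐ x ∂μ, Tendsto (fun n => z₀ (s n)) atTop (𝓝 ((P x)⁻¹ • u x)) := by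
    filter_upwards [hs, hPz] with x hx hzx
    refine (hx.const_smul (P x)⁻¹).congr fun n => ?_
    rw [show e (s n) x = P x • z₀ (s n) from congrFun hzx (s n), inv_smul_smul]
  obtain ⟨x₀, hx₀⟩ := hlim.exists
  refine ⟨(P x₀)⁻¹ • u x₀, ?_⟩
  filter_upwards [hlim] with x hx
  rw [← tendsto_nhds_unique hx hx₀, smul_inv_smul]

end EquivariantMaps

section ProbabilityMeasureAction

variable {G K : Type*} [MeasurableSpace K]

open scoped NNReal BoundedContinuousFunction in
lemma probabilityMeasure_topology_eq_iInf_induced [TopologicalSpace K] [OpensMeasurableSpace K] :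
    (inferInstance : TopologicalSpace (ProbabilityMeasure K)) =
      ⨅ φ : K →ᵇ ℝ≥0, .induced (fun ν => ν.toFiniteMeasure.testAgainstNN φ) inferInstance := by
  have hind : IsInducing fun (ν : ProbabilityMeasure K) (φ : K →ᵇ ℝ≥0) =>
      ν.toFiniteMeasure.testAgainstNN φ :=
    have hweak : IsInducing fun (w : WeakDual ℝ≥0 (K →ᵇ ℝ≥0)) φ => w φ := ⟨rfl⟩
    have hfinite : IsInducing (FiniteMeasure.toWeakDualBCNN (Ω := K)) := ⟨rfl⟩
    hweak.comp (hfinite.comp (ProbabilityMeasure.toFiniteMeasure_isEmbedding K).isInducing)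
  rw [hind.eq_induced, Pi.topologicalSpace, induced_iInf]
  simp only [induced_compose]
  rfl

instance [TopologicalSpace K] [OpensMeasurableSpace K]
    [SecondCountableTopology (ProbabilityMeasure K)] :
    OpensMeasurableSpace (ProbabilityMeasure K) := by
  refine ⟨?_⟩
  rw [borel_eq_generateFrom_of_subbasis (probabilityMeasure_topology_eq_iInf_induced.trans
    (generateFrom_iUnion_isOpen _).symm)]
  refine MeasurableSpace.generateFrom_le fun s hs => ?_
  obtain ⟨φ, U, hU, rfl⟩ := Set.mem_iUnion.1 hs
  have hφ : Measurable fun ν : ProbabilityMeasure K => ν.toFiniteMeasure.testAgainstNN φ :=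
    ((Measure.measurable_lintegral (by fun_prop)).comp measurable_subtype_coe).ennreal_toNNReal
  exact hφ hU.measurableSet

/-- A measurable action on a space induces an action on its probability measures, by
push-forward. -/
noncomputable instance probabilityMeasureMulAction [Monoid G] [MulAction G K]
    [MeasurableConstSMul G K] : MulAction G (ProbabilityMeasure K) where
  smul g ν := ν.map (measurable_const_smul g).aemeasurable
  one_smul ν := Subtype.ext <| by
    change (ν : Measure K).map (fun y => (1 : G) • y) = ν
    simp only [one_smul, Measure.map_id']
  mul_smul g h ν := Subtype.ext <| by
    change (ν : Measure K).map (fun y => (g * h) • y) =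
      ((ν : Measure K).map (h • ·)).map (g • ·)
    rw [Measure.map_map (measurable_const_smul g) (measurable_const_smul h)]
    simp only [mul_smul, Function.comp_def]

lemma coe_smul_probabilityMeasure [Monoid G] [MulAction G K] [MeasurableConstSMul G K] (g : G)
    (ν : ProbabilityMeasure K) : ((g • ν : ProbabilityMeasure K) : Measure K) =
      (ν : Measure K).map (g • ·) :=
  rfl

instance [Monoid G] [MulAction G K] [TopologicalSpace K] [BorelSpace K]
    [ContinuousConstSMul G K] : ContinuousConstSMul G (ProbabilityMeasure K) where
  continuous_const_smul g := ProbabilityMeasure.continuous_map (continuous_const_smul g)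

instance [Monoid G] [MulAction G K] [TopologicalSpace G] [SecondCountableTopology G]
    [PseudoMetrizableSpace G] [MeasurableSpace G] [OpensMeasurableSpace G]
    [TopologicalSpace K] [SecondCountableTopology K] [PseudoMetrizableSpace K] [BorelSpace K]
    [ContinuousSMul G K] :
    ContinuousSMul G (ProbabilityMeasure K) where
  continuous_smul := by
    have smul_eq (q : G × ProbabilityMeasure K) : q.1 • q.2 =
        ((diracProba q.1).prod q.2).map continuous_smul.measurable.aemeasurable :=
      Subtype.ext <| by
        change (q.2 : Measure K).map (q.1 • ·) =
          ((Measure.dirac q.1).prod (q.2 : Measure K)).map fun r : G × K => r.1 • r.2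
        rw [Measure.dirac_prod, Measure.map_map continuous_smul.measurable measurable_prodMk_left]
        rfl
    simp only [smul_eq]
    exact (ProbabilityMeasure.continuous_map continuous_smul).comp
      (ProbabilityMeasure.continuous_prod.comp
        ((continuous_diracProba.comp continuous_fst).prodMk continuous_snd))

lemma tendsto_smul_probabilityMeasure [TopologicalSpace K] [OpensMeasurableSpace K] [Monoid G]
    [MulAction G K] [MeasurableConstSMul G K] {g : ℕ → G} {F : K → K} (hF : Measurable F)
    (h : ∀ y, Tendsto (fun n => g n • y) atTop (𝓝 (F y))) (ν : ProbabilityMeasure K) :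
    Tendsto (fun n => g n • ν) atTop (𝓝 (ν.map hF.aemeasurable)) :=
  (tendstoInDistribution_of_ae_tendsto (fun n => (measurable_const_smul (g n)).aemeasurable)
    hF.aemeasurable (ae_of_all _ h)).tendsto

end ProbabilityMeasureAction

section OrbitSpace

variable {G : Type*} [Group G]

lemma mem_closure_orbit_of_inseparable {Z : Type*} [TopologicalSpace Z] [MulAction G Z]
    [ContinuousConstSMul G Z] {z w : Z}
    (h : Inseparable (Quotient.mk (MulAction.orbitRel G Z) z) (Quotient.mk _ w)) :
    w ∈ closure (MulAction.orbit G z) := by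
  have hfiber : Quotient.mk (MulAction.orbitRel G Z) ⁻¹' {Quotient.mk _ z} =
      MulAction.orbit G z := by
    ext v
    exact Quotient.eq
  have hopen : IsOpenMap (Quotient.mk (MulAction.orbitRel G Z)) := isOpenMap_quotient_mk'_mul
  rw [← hfiber, ← hopen.preimage_closure_eq_closure_preimage continuous_quotient_mk']
  exact h.specializes.mem_closure

/-- A weakening of the convergence property of a group action: every sequence of the group has a
subsequence converging pointwise, either to a group element or to a map with at most two values. It
holds for `GL(2,ℝ)` on the projective line, where a limit of matrices of norm one is either
invertible or of rank one. -/
def HasPointwiseConvergenceProperty (G K : Type*) [SMul G K] [TopologicalSpace K] : Prop :=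
  ∀ g : ℕ → G, ∃ (s : ℕ → ℕ) (F : K → K), StrictMono s ∧
    (∀ y, Tendsto (fun n => g (s n) • y) atTop (𝓝 (F y))) ∧
    ((∃ h : G, ∀ y, F y = h • y) ∨ ∃ a b, ∀ y, F y = a ∨ F y = b)

variable {K ι : Type*} [MulAction G K] [MeasurableSpace K] [MeasurableConstSMul G K]
  {z w : ι → ProbabilityMeasure K} {F H : K → K}

lemma mem_orbit_of_map_eq_of_ae_eq_smul (hF : ∀ k, (w k : Measure K) = (z k : Measure K).map F)
    {g : G} (hg : ∀ k, ∀ᵐ y ∂(z k : Measure K), F y = g • y) : w ∈ MulAction.orbit G z :=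
  ⟨g, funext fun k => Subtype.ext <| ((hF k).trans (Measure.map_congr (hg k))).symm⟩

lemma mem_orbit_of_map_eq_of_forall_eq_or_eq [MeasurableSingletonClass K]
    [MulAction.IsMultiplyPretransitive G K 2]
    (hF : ∀ k, (w k : Measure K) = (z k : Measure K).map F) (hFm : Measurable F)
    (hH : ∀ k, (z k : Measure K) = (w k : Measure K).map H) (hHm : Measurable H) {a b : K}
    (hab : ∀ y, H y = a ∨ H y = b) : w ∈ MulAction.orbit G z := by
  have hsupp (k : ι) : ∀ᵐ y ∂(z k : Measure K), y = a ∨ y = b := by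
    rw [hH k]
    exact (ae_map_iff hHm.aemeasurable
      ((measurableSet_singleton a).union (measurableSet_singleton b))).2 (ae_of_all _ hab)
  by_cases hFab : F a = F b
  · have hdirac (k : ι) : ∀ᵐ y ∂(z k : Measure K), y = H (F a) := by
      rw [hH k, hF k, Measure.map_map hHm hFm]
      refine (ae_map_iff (hHm.comp hFm).aemeasurable (measurableSet_singleton _)).2 ?_
      filter_upwards [hsupp k]
      rintro y (rfl | rfl)
      exacts [rfl, congrArg H hFab.symm]
    have := MulAction.isPretransitive_of_is_two_pretransitive (G := G) (α := K)
    obtain ⟨g, hg⟩ := MulAction.exists_smul_eq G (H (F a)) (F (H (F a)))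
    exact mem_orbit_of_map_eq_of_ae_eq_smul hF fun k => (hdirac k).mono fun y hy => by rw [hy, hg]
  · obtain ⟨g, hga, hgb⟩ := MulAction.is_two_pretransitive_iff.1
      ‹MulAction.IsMultiplyPretransitive G K 2› (ne_of_apply_ne F hFab) hFab
    refine mem_orbit_of_map_eq_of_ae_eq_smul (g := g) hF fun k => (hsupp k).mono ?_
    rintro y (rfl | rfl)
    exacts [hga.symm, hgb.symm]

variable [TopologicalSpace K] [CompactSpace K] [MetrizableSpace K] [BorelSpace K]

lemma HasPointwiseConvergenceProperty.exists_map_eq_of_mem_closure_orbit [Countable ι]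
    (hG : HasPointwiseConvergenceProperty G K) (hw : w ∈ closure (MulAction.orbit G z)) :
    ∃ F : K → K, Measurable F ∧ (∀ k, (w k : Measure K) = (z k : Measure K).map F) ∧
      ((∃ h : G, ∀ y, F y = h • y) ∨ ∃ a b, ∀ y, F y = a ∨ F y = b) := by
  obtain ⟨v, hv, hlim⟩ := mem_closure_iff_seq_limit.1 hw
  choose g hg using hv
  obtain ⟨s, F, hs, hF, hlimit⟩ := hG g
  have hFm : Measurable F := measurable_of_tendsto_metrizable
    (fun n => measurable_const_smul (g (s n))) (tendsto_pi_nhds.2 hF)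
  refine ⟨F, hFm, fun k => ?_, hlimit⟩
  obtain rfl : (fun n => g n • z) = v := funext hg
  have hlim_k : Tendsto (fun n => g (s n) • z k) atTop (𝓝 (w k)) :=
    (tendsto_pi_nhds.1 hlim k).comp hs.tendsto_atTop
  exact congrArg _ (tendsto_nhds_unique hlim_k (tendsto_smul_probabilityMeasure hFm hF (z k)))

end OrbitSpace

theorem HasPointwiseConvergenceProperty.t0Space_orbitRelQuotient {G K ι : Type*} [Group G]
    [Countable ι] [MulAction G K] [TopologicalSpace K] [CompactSpace K] [MetrizableSpace K]
    [MeasurableSpace K] [BorelSpace K] [ContinuousConstSMul G K]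
    [MulAction.IsMultiplyPretransitive G K 2] (hG : HasPointwiseConvergenceProperty G K) :
    T0Space (MulAction.orbitRel.Quotient G (ι → ProbabilityMeasure K)) := by
  refine ⟨fun {q r} => Quotient.inductionOn₂ q r fun w z hwz => Quotient.sound ?_⟩
  obtain ⟨F, hFm, hF, -⟩ :=
    hG.exists_map_eq_of_mem_closure_orbit (mem_closure_orbit_of_inseparable hwz.symm)
  obtain ⟨H, hHm, hH, ⟨g, hg⟩ | ⟨a, b, hab⟩⟩ :=
    hG.exists_map_eq_of_mem_closure_orbit (mem_closure_orbit_of_inseparable hwz)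
  · exact MulAction.mem_orbit_symm.1
      (mem_orbit_of_map_eq_of_ae_eq_smul hH fun k => ae_of_all _ hg)
  · exact mem_orbit_of_map_eq_of_forall_eq_or_eq hF hFm hH hHm hab

section GeneralLinearGroup

variable {m n R : Type*} [TopologicalSpace R]

instance matrixSigmaCompactSpace [Finite m] [Finite n] [SigmaCompactSpace R] :
    SigmaCompactSpace (Matrix m n R) :=
  inferInstanceAs (SigmaCompactSpace (m → n → R))

instance matrixMetrizableSpace [Finite m] [Finite n] [MetrizableSpace R] :
    MetrizableSpace (Matrix m n R) :=
  inferInstanceAs (MetrizableSpace (m → n → R))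

instance matrixBorelSpace [Countable m] [Countable n] [SecondCountableTopology R]
    [MeasurableSpace R] [BorelSpace R] : BorelSpace (Matrix m n R) :=
  inferInstanceAs (BorelSpace (m → n → R))

variable [Fintype n] [DecidableEq n]

instance glSigmaCompactSpace : SigmaCompactSpace (GL n ℝ) := by
  have : SigmaCompactSpace (Matrix n n ℝ)ᵐᵒᵖ :=
    MulOpposite.opHomeomorph.symm.isClosedEmbedding.sigmaCompactSpace
  exact Units.isClosedEmbedding_embedProduct.sigmaCompactSpace

lemma isEmbedding_glVal : IsEmbedding (Units.val : GL n ℝ → Matrix n n ℝ) := by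
  refine Units.isEmbedding_val_mk' (f := fun M => M⁻¹) (fun M hM => ?_) fun g =>
    (Matrix.coe_units_inv g).symm
  have hdet : M.det ≠ 0 := ((Matrix.isUnit_iff_isUnit_det M).1 hM).ne_zero
  simp only [Matrix.inv_def, Ring.inverse_eq_inv']
  exact ((ContinuousAt.inv₀ (by fun_prop) hdet).smul (by fun_prop)).continuousWithinAt

instance glMetrizableSpace : MetrizableSpace (GL n ℝ) :=
  isEmbedding_glVal.metrizableSpace

instance glBorelSpace : BorelSpace (GL n ℝ) :=
  ⟨by rw [isEmbedding_glVal.eq_induced, borel_comap, ← matrixBorelSpace.measurable_eq]; rfl⟩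

end GeneralLinearGroup

section ProjectiveSpace

variable {d : ℕ}

/-- The topology of projective space as the quotient of the space of nonzero vectors. -/
noncomputable instance projTopologicalSpace : TopologicalSpace (Proj d) :=
  inferInstanceAs (TopologicalSpace (Quotient _))

lemma continuous_projMk' :
    Continuous (Projectivization.mk' ℝ : {v : Fin d → ℝ // v ≠ 0} → Proj d) :=
  continuous_quotient_mk'

lemma tendsto_projMk {ι : Type*} {l : Filter ι} {u : ι → Fin d → ℝ} (hu : ∀ i, u i ≠ 0)
    {v : Fin d → ℝ} (hv : v ≠ 0) (h : Tendsto u l (𝓝 v)) :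
    Tendsto (fun i => (Projectivization.mk ℝ (u i) (hu i) : Proj d)) l
      (𝓝 (Projectivization.mk ℝ v hv)) :=
  (continuous_projMk'.tendsto ⟨v, hv⟩).comp (f := fun i => ⟨u i, hu i⟩) (tendsto_subtype_rng.2 h)

instance projCompactSpace : CompactSpace (Proj d) := by
  let π : Metric.sphere (0 : Fin d → ℝ) 1 → Proj d :=
    fun v => .mk' ℝ ⟨v, ne_zero_of_mem_unit_sphere v⟩
  have hπ : Continuous π := continuous_projMk'.comp (by fun_prop)
  have hsurj : Function.Surjective π := by
    refine Projectivization.ind fun v hv => ⟨⟨‖v‖⁻¹ • v, by simp [norm_smul, hv]⟩, ?_⟩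
    exact (Projectivization.mk_eq_mk_iff' ..).2 ⟨‖v‖⁻¹, rfl⟩
  exact hsurj.compactSpace hπ

/-- The matrix of the orthogonal projection onto a line. It realizes projective space as a
subspace of the space of matrices. -/
noncomputable def lineProjectionMatrix : Proj d → Matrix (Fin d) (Fin d) ℝ :=
  Projectivization.lift (fun v => (v.1 ⬝ᵥ v.1)⁻¹ • Matrix.vecMulVec v.1 v.1) <| by
    rintro ⟨_, hv⟩ ⟨w, -⟩ t rfl
    have ht : t ≠ 0 := left_ne_zero_of_smul hv
    simp only [Matrix.smul_vecMulVec, Matrix.vecMulVec_smul, smul_dotProduct, dotProduct_smul,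
      smul_smul, smul_eq_mul]
    congr 1
    field_simp

lemma lineProjectionMatrix_mk {v : Fin d → ℝ} (hv : v ≠ 0) :
    lineProjectionMatrix (Projectivization.mk ℝ v hv) = (v ⬝ᵥ v)⁻¹ • Matrix.vecMulVec v v :=
  rfl

lemma continuous_lineProjectionMatrix : Continuous (lineProjectionMatrix (d := d)) := by
  have hne (v : {v : Fin d → ℝ // v ≠ 0}) : v.1 ⬝ᵥ v.1 ≠ 0 := by simpa using v.2
  exact Continuous.quotient_lift (by fun_prop (disch := exact hne _)) _

lemma lineProjectionMatrix_injective : Function.Injective (lineProjectionMatrix (d := d)) := by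
  intro x y h
  induction x using Projectivization.ind with | h v hv => ?_
  induction y using Projectivization.ind with | h w hw => ?_
  have hfix : (lineProjectionMatrix (Projectivization.mk ℝ v hv)).mulVec v = v := by
    have hvv : v ⬝ᵥ v ≠ 0 := by simpa using hv
    simp [lineProjectionMatrix_mk, Matrix.smul_mulVec, Matrix.vecMulVec_mulVec, smul_smul, hvv]
  refine (Projectivization.mk_eq_mk_iff' ..).2 ⟨(w ⬝ᵥ w)⁻¹ * (w ⬝ᵥ v), ?_⟩
  rw [h, lineProjectionMatrix_mk, Matrix.smul_mulVec, Matrix.vecMulVec_mulVec, op_smul_eq_smul,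
    smul_smul] at hfix
  exact hfix

lemma isClosedEmbedding_lineProjectionMatrix :
    IsClosedEmbedding (lineProjectionMatrix (d := d)) :=
  continuous_lineProjectionMatrix.isClosedEmbedding lineProjectionMatrix_injective

instance projMetrizableSpace : MetrizableSpace (Proj d) :=
  isClosedEmbedding_lineProjectionMatrix.isEmbedding.metrizableSpace

instance projBorelSpace : BorelSpace (Proj d) := by
  have : PolishSpace {v : Fin d → ℝ // v ≠ 0} := isOpen_ne.polishSpace
  exact ⟨continuous_projMk'.map_eq_borel Quotient.mk_surjective⟩

lemma mul_lineProjectionMatrix_mul_transpose (g : GL (Fin d) ℝ) {v : Fin d → ℝ} (hv : v ≠ 0) :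
    g.1 * lineProjectionMatrix (.mk ℝ v hv) * g.1.transpose =
      (v ⬝ᵥ v)⁻¹ • Matrix.vecMulVec (g • v) (g • v) := by
  rw [lineProjectionMatrix_mk, Matrix.mul_smul, Matrix.smul_mul, Matrix.mul_vecMulVec,
    Matrix.vecMulVec_mul, Matrix.vecMul_transpose]
  rfl

lemma trace_mul_lineProjectionMatrix_mul_transpose_ne_zero (g : GL (Fin d) ℝ) (x : Proj d) :
    (g.1 * lineProjectionMatrix x * g.1.transpose).trace ≠ 0 := by
  induction x using Projectivization.ind with | h v hv => ?_
  rw [mul_lineProjectionMatrix_mul_transpose, Matrix.trace_smul, Matrix.trace_vecMulVec]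
  have hgv : g • v ≠ 0 := (smul_ne_zero_iff_ne g).2 hv
  exact smul_ne_zero (by simpa using hv) (by simpa using hgv)

lemma lineProjectionMatrix_smul (g : GL (Fin d) ℝ) (x : Proj d) :
    lineProjectionMatrix (g • x) = (g.1 * lineProjectionMatrix x * g.1.transpose).trace⁻¹ •
      (g.1 * lineProjectionMatrix x * g.1.transpose) := by
  induction x using Projectivization.ind with | h v hv => ?_
  have hvv : v ⬝ᵥ v ≠ 0 := by simpa using hv
  rw [mul_lineProjectionMatrix_mul_transpose, Projectivization.smul_mk, lineProjectionMatrix_mk,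
    Matrix.trace_smul, Matrix.trace_vecMulVec, smul_smul, smul_eq_mul, mul_inv, inv_inv,
    mul_right_comm, mul_inv_cancel₀ hvv, one_mul]

instance projContinuousSMul : ContinuousSMul (GL (Fin d) ℝ) (Proj d) where
  continuous_smul := by
    rw [isClosedEmbedding_lineProjectionMatrix.continuous_iff]
    have hline := continuous_lineProjectionMatrix (d := d)
    have hconj : Continuous fun q : GL (Fin d) ℝ × Proj d =>
        q.1.1 * lineProjectionMatrix q.2 * q.1.1.transpose := by fun_prop
    simp only [Function.comp_def, lineProjectionMatrix_smul]
    exact (hconj.matrix_trace.inv₀ fun q =>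
      trace_mul_lineProjectionMatrix_mul_transpose_ne_zero q.1 q.2).smul hconj

instance glIsMultiplyPretransitive {n K : Type*} [Fintype n] [DecidableEq n] [Field K] :
    MulAction.IsMultiplyPretransitive (GL n K) (Projectivization K (n → K)) 2 := by
  have hSL : MulAction.IsMultiplyPretransitive (Matrix.SpecialLinearGroup n K)
      (Projectivization K (n → K)) 2 := inferInstance
  rw [MulAction.is_two_pretransitive_iff] at hSL ⊢
  intro _ _ _ _ hab hcd
  obtain ⟨g, hg⟩ := hSL hab hcd
  exact ⟨g, hg⟩

end ProjectiveSpace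

section ProjectiveLine

lemma projectivization_mk_eq_mk''_of_mem {K V : Type*} [DivisionRing K] [AddCommGroup V]
    [Module K V] {H : Submodule K V} (hH : Module.finrank K H = 1) {v : V} (hv : v ≠ 0)
    (hvH : v ∈ H) :
    Projectivization.mk K v hv = Projectivization.mk'' H hH := by
  have : FiniteDimensional K H := Module.finite_of_finrank_eq_succ hH
  refine Projectivization.submodule_injective ?_
  rw [Projectivization.submodule_mk, Projectivization.submodule_mk'']
  exact Submodule.eq_of_le_of_finrank_eq ((Submodule.span_singleton_le_iff_mem v H).2 hvH)
    ((finrank_span_singleton hv).trans hH.symm)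

lemma exists_subseq_tendsto_smul_mk {d : ℕ} [NeZero d] (g : ℕ → GL (Fin d) ℝ) :
    ∃ (s : ℕ → ℕ) (M : Matrix (Fin d) (Fin d) ℝ), StrictMono s ∧ M ≠ 0 ∧
      ∀ (v : Fin d → ℝ) (hv : v ≠ 0) (hMv : M.mulVec v ≠ 0),
        Tendsto (fun k => g (s k) • (Projectivization.mk ℝ v hv : Proj d)) atTop
          (𝓝 (Projectivization.mk ℝ (M.mulVec v) hMv)) := by
  let _ := Matrix.normedAddCommGroup (m := Fin d) (n := Fin d) (α := ℝ)
  let _ := Matrix.normedSpace (m := Fin d) (n := Fin d) (α := ℝ) (R := ℝ)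
  have : ProperSpace (Matrix (Fin d) (Fin d) ℝ) := FiniteDimensional.proper_real _
  let N (k : ℕ) : Matrix (Fin d) (Fin d) ℝ := ‖(g k).1‖⁻¹ • (g k).1
  have hnorm (k : ℕ) : ‖(g k).1‖⁻¹ ≠ 0 := inv_ne_zero (norm_ne_zero_iff.2 (g k).ne_zero)
  have hN (k : ℕ) : N k ∈ Metric.sphere (0 : Matrix (Fin d) (Fin d) ℝ) 1 := by
    simp [N, norm_smul, (g k).ne_zero]
  obtain ⟨M, hM, s, hs, hlim⟩ :=
    (isCompact_sphere (0 : Matrix (Fin d) (Fin d) ℝ) 1).tendsto_subseq hN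
  refine ⟨s, M, hs, ne_zero_of_mem_unit_sphere ⟨M, hM⟩, fun v hv hMv => ?_⟩
  have hNv (k : ℕ) : (N k).mulVec v = ‖(g k).1‖⁻¹ • (g k • v) := Matrix.smul_mulVec _ _ _
  have hNv_ne (k : ℕ) : (N k).mulVec v ≠ 0 :=
    hNv k ▸ smul_ne_zero (hnorm k) ((smul_ne_zero_iff_ne (g k)).2 hv)
  have hmk (k : ℕ) : g k • (.mk ℝ v hv : Proj d) = .mk ℝ ((N k).mulVec v) (hNv_ne k) :=
    ((Projectivization.mk_eq_mk_iff' ..).2 ⟨‖(g k).1‖⁻¹, (hNv k).symm⟩).symm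
  simp only [hmk]
  exact tendsto_projMk _ hMv
    (((continuous_id.matrix_mulVec continuous_const).tendsto M).comp hlim)

lemma exists_mk_eq_or_mk_mulVec_eq {K : Type*} [Field K] {M : Matrix (Fin 2) (Fin 2) K}
    (hM : M ≠ 0) (hdet : M.det = 0) :
    ∃ a b : Projectivization K (Fin 2 → K), ∀ v (hv : v ≠ 0),
      Projectivization.mk K v hv = a ∨
        ∃ hMv : M.mulVec v ≠ 0, Projectivization.mk K (M.mulVec v) hMv = b := by
  have hsum := M.mulVecLin.finrank_range_add_finrank_ker
  rw [Module.finrank_fin_fun] at hsum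
  have hrange : Module.finrank K M.mulVecLin.range ≠ 0 := by
    rw [Ne, Submodule.finrank_eq_zero, LinearMap.range_eq_bot]
    exact fun h => hM (by ext i j; simpa using congrFun (LinearMap.congr_fun h (Pi.single j 1)) i)
  have hker : Module.finrank K M.mulVecLin.ker ≠ 0 := by
    obtain ⟨v, hv, hMv⟩ := Matrix.exists_mulVec_eq_zero_iff.2 hdet
    rw [Ne, Submodule.finrank_eq_zero]
    exact (Submodule.ne_bot_iff _).2 ⟨v, hMv, hv⟩
  refine ⟨.mk'' _ (show Module.finrank K M.mulVecLin.ker = 1 by omega),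
    .mk'' _ (show Module.finrank K M.mulVecLin.range = 1 by omega), fun v hv => ?_⟩
  by_cases hMv : M.mulVec v = 0
  · exact .inl (projectivization_mk_eq_mk''_of_mem _ hv hMv)
  · exact .inr ⟨hMv,
      projectivization_mk_eq_mk''_of_mem _ hMv (LinearMap.mem_range_self M.mulVecLin v)⟩

lemma hasPointwiseConvergenceProperty_projectiveLine :
    HasPointwiseConvergenceProperty (GL (Fin 2) ℝ) (Proj 2) := by
  classical
  intro g
  obtain ⟨s, M, hs, hM, hlim⟩ := exists_subseq_tendsto_smul_mk g
  by_cases hdet : M.det = 0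
  · obtain ⟨a, b, hab⟩ := exists_mk_eq_or_mk_mulVec_eq hM hdet
    obtain ⟨c, t, ht, hc⟩ := CompactSpace.tendsto_subseq fun k => g (s k) • a
    refine ⟨s ∘ t, fun y => if y = a then c else b, hs.comp ht, fun y => ?_,
      .inr ⟨c, b, fun y => ite_eq_or_eq ..⟩⟩
    dsimp only
    split_ifs with hy
    · exact hy ▸ hc
    · induction y using Projectivization.ind with | h v hv => ?_
      obtain ⟨hMv, rfl⟩ := (hab v hv).resolve_left hy
      exact (hlim v hv hMv).comp ht.tendsto_atTop
  · let h := Matrix.GeneralLinearGroup.mkOfDetNeZero M hdet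
    refine ⟨s, (h • ·), hs, ?_, .inl ⟨h, fun y => rfl⟩⟩
    exact Projectivization.ind fun v hv => hlim v hv ((smul_ne_zero_iff_ne h).2 hv)

instance : T0Space
    (MulAction.orbitRel.Quotient (GL (Fin 2) ℝ) (ℕ → ProbabilityMeasure (Proj 2))) :=
  hasPointwiseConvergenceProperty_projectiveLine.t0Space_orbitRelQuotient

end ProjectiveLine

section InvariantMeasures

variable {X K : Type*} [MeasurableSpace X] [MeasurableSpace K]

lemma kernel_id_prod_map_uncurry_apply {L : Type*} [MeasurableSpace L] (κ : Kernel X K)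
    [IsSFiniteKernel κ] {C : X → K → L} (hC : Measurable (Function.uncurry C)) (x : X) :
    (Kernel.id ×ₖ κ).map (Function.uncurry C) x = (κ x).map (C x) := by
  rw [Kernel.map_apply _ hC, Kernel.prod_apply, Kernel.id_apply, Measure.dirac_prod,
    Measure.map_map hC measurable_prodMk_left]
  rfl

lemma ae_eq_map_of_map_compProd_eq [StandardBorelSpace X]
    [MeasurableSpace.CountablyGenerated K] {μ : Measure X} [IsFiniteMeasure μ] {g : X → X}
    (hg : Function.Injective g) (hgm : MeasurePreserving g μ μ) {C : X → K → K}
    (hC : Measurable (Function.uncurry C)) (κ : Kernel X K) [IsFiniteKernel κ]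
    (h : (μ ⊗ₘ κ).map (fun q => (g q.1, C q.1 q.2)) = μ ⊗ₘ κ) :
    ∀ᵐ x ∂μ, κ (g x) = (κ x).map (C x) := by
  let η : Kernel X K := (Kernel.id ×ₖ κ).map (Function.uncurry C)
  have hη_apply (x : X) : η x = (κ x).map (C x) := kernel_id_prod_map_uncurry_apply κ hC x
  have hg_id : MeasurableEmbedding (Prod.map g (id : K → K)) :=
    (hgm.measurable.measurableEmbedding hg).prodMap .id
  have hF : Measurable fun q : X × K => (g q.1, C q.1 q.2) :=
    (hgm.measurable.comp measurable_fst).prodMk hC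
  have hcomap : (μ ⊗ₘ κ.comap g hgm.measurable).map (Prod.map g id) = μ ⊗ₘ κ := by
    ext s hs
    rw [Measure.map_apply hg_id.measurable hs, Measure.compProd_apply (hg_id.measurable hs),
      Measure.compProd_apply hs,
      ← hgm.lintegral_comp (Kernel.measurable_kernel_prodMk_left hs)]
    rfl
  have hη : (μ ⊗ₘ η).map (Prod.map g id) = μ ⊗ₘ κ := by
    rw [← h]
    ext s hs
    rw [Measure.map_apply hg_id.measurable hs, Measure.compProd_apply (hg_id.measurable hs),
      Measure.map_apply hF hs, Measure.compProd_apply (hF hs)]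
    refine lintegral_congr fun x => ?_
    have hCx : Measurable (C x) := hC.comp measurable_prodMk_left
    rw [hη_apply, Measure.map_apply hCx (measurable_prodMk_left (hg_id.measurable hs))]
    rfl
  have hcompProd : μ ⊗ₘ κ.comap g hgm.measurable = μ ⊗ₘ η := by
    rw [← hg_id.comap_map (μ ⊗ₘ κ.comap g hgm.measurable), hcomap, ← hη, hg_id.comap_map]
  filter_upwards [Kernel.ae_eq_of_compProd_eq hcompProd] with x hx
  exact hx.trans (hη_apply x)

variable {Y G : Type*} [MeasurableSpace Y] {p : Measure Y} {μ : Measure X} {f : Y → X → X}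
  {A : Y → X → G} [Group G] [MulAction G K] [MeasurableSpace G] [MeasurableSMul₂ G K] {P : X → G}

lemma measurable_smul_probabilityMeasure {u : X → ProbabilityMeasure K} (hP : Measurable P)
    (hu : Measurable u) : Measurable fun x => P x • u x := by
  let κ : Kernel X K := ⟨fun x => u x, measurable_subtype_coe.comp hu⟩
  have : IsMarkovKernel κ := ⟨fun x => inferInstanceAs (IsProbabilityMeasure (u x : Measure K))⟩
  have hsmul : Measurable fun q : X × K => P q.1 • q.2 :=
    (hP.comp measurable_fst).smul measurable_snd
  have hmap (x : X) : (Kernel.id ×ₖ κ).map (Function.uncurry fun x y => P x • y) x =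
      (κ x).map (P x • ·) :=
    kernel_id_prod_map_uncurry_apply κ (C := fun x y => P x • y) hsmul x
  exact (funext hmap ▸ Kernel.measurable _).subtype_mk

lemma isEquivariant_smul_of_map_compProd_eq [StandardBorelSpace X]
    [MeasurableSpace.CountablyGenerated K] [IsFiniteMeasure μ] [MeasurableMul₂ G]
    [MeasurableInv G] (hfp : ∀ᵐ i ∂p, Function.Injective (f i) ∧ MeasurePreserving (f i) μ μ)
    (hA : Measurable fun q : Y × X => A q.1 q.2) (hP : Measurable P) {κ : Kernel X K}
    [IsFiniteKernel κ] {u : X → ProbabilityMeasure K} (hu : ∀ x, (u x : Measure K) = κ x)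
    (hinv : ∀ᵐ i ∂p, (μ ⊗ₘ κ).map (fun q =>
      (f i q.1, ((P (f i q.1))⁻¹ * A i q.1 * P q.1) • q.2)) = μ ⊗ₘ κ) :
    IsEquivariant μ p f A fun x => P x • u x := by
  filter_upwards [hfp, hinv] with i ⟨hinj, hpres⟩ hinv_i
  have hB : Measurable fun x => (P (f i x))⁻¹ * A i x * P x :=
    ((hP.comp hpres.measurable).inv.mul (hA.comp measurable_prodMk_left)).mul hP
  filter_upwards [ae_eq_map_of_map_compProd_eq hinj hpres
    (C := fun x y => ((P (f i x))⁻¹ * A i x * P x) • y)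
    ((hB.comp measurable_fst).smul measurable_snd) κ hinv_i] with x hx
  have hux : u (f i x) = ((P (f i x))⁻¹ * A i x * P x) • u x :=
    ProbabilityMeasure.toMeasure_injective <| by rw [coe_smul_probabilityMeasure, hu, hu, hx]
  rw [hux, smul_smul, smul_smul, mul_assoc, mul_inv_cancel_left]

end InvariantMeasures

theorem stmt7_general {X Y G K : Type*} [MeasurableSpace X] [StandardBorelSpace X]
    {μ : Measure X} [IsProbabilityMeasure μ] [MeasurableSpace Y] {p : Measure Y}
    {Pr : Measure (ℤ → Y)} [IsProbabilityMeasure Pr] (hPr : IsBernoulli p Pr)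
    [Group G] [TopologicalSpace G] [IsTopologicalGroup G] [SigmaCompactSpace G]
    [MetrizableSpace G] [MeasurableSpace G] [BorelSpace G] [TopologicalSpace K] [CompactSpace K]
    [MetrizableSpace K] [MeasurableSpace K] [BorelSpace K] [MulAction G K] [ContinuousSMul G K]
    [T0Space (MulAction.orbitRel.Quotient G (ℕ → ProbabilityMeasure K))]
    {f : Y → X → X} {A : Y → X → G} (hf : Measurable fun q : Y × X => f q.1 q.2)
    (hfp : ∀ᵐ i ∂p, Function.Injective (f i) ∧ MeasurePreserving (f i) μ μ)
    (hA : Measurable fun q : Y × X => A q.1 q.2) (herg : Ergodic (fbar f) (Pr.prod μ)) :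
    ∃ P : X → G, Measurable P ∧
      ∀ μhat : Measure (X × K), IsProbabilityMeasure μhat → μhat.map Prod.fst = μ →
        (∀ᵐ i ∂p, μhat.map (fun q : X × K =>
            (f i q.1, ((P (f i q.1))⁻¹ * A i q.1 * P q.1) • q.2)) = μhat) →
        ∃ ν : Measure K, IsProbabilityMeasure ν ∧ μhat = μ.prod ν := by
  have : SecondCountableTopology G :=
    let _ := metrizableSpaceMetric G
    EMetric.secondCountable_of_sigmaCompact G
  obtain ⟨P, hP, hstraight⟩ :=
    exists_measurable_forall_isEquivariant_ae_eq_smul (M := ProbabilityMeasure K) hPr hf herg A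
  refine ⟨P, hP, fun μhat _ hfst hinv => ?_⟩
  have : Nonempty K := (nonempty_prod.1 μhat.nonempty_of_neZero).2
  have : PolishSpace K :=
    let _ := metrizableSpaceMetric K
    inferInstance
  let κ : Kernel X K := μhat.condKernel
  let u : X → ProbabilityMeasure K := fun x => ⟨κ x, inferInstance⟩
  have hdisint : μ ⊗ₘ κ = μhat := hfst ▸ μhat.disintegrate κ
  obtain ⟨m, hm⟩ := hstraight (fun x => P x • u x)
    (measurable_smul_probabilityMeasure hP κ.measurable.subtype_mk)
    (isEquivariant_smul_of_map_compProd_eq hfp hA hP (fun _ => rfl) (hdisint.symm ▸ hinv))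
  refine ⟨m, inferInstance, ?_⟩
  rw [← Measure.compProd_const, ← hdisint]
  exact Measure.compProd_congr <| hm.mono fun x hx =>
    congrArg Subtype.val (smul_left_cancel (P x) (x := u x) hx)

/-- An essentially unbounded random `GL(2,ℝ)`-valued cocycle is cohomologous
to a random cocycle all of whose invariant probability measures on `X × ℙ(ℝ²)` are product
measures. -/
theorem stmt7
    {X : Type*} [MeasurableSpace X] [StandardBorelSpace X]
    (μ : Measure X) [IsProbabilityMeasure μ]
    {Y : Type*} [MeasurableSpace Y] (p : Measure Y) [IsProbabilityMeasure p]
    (Pr : Measure (ℤ → Y)) [IsProbabilityMeasure Pr] (hPr : IsBernoulli p Pr)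
    (f : Y → X → X) (A : Y → X → GL (Fin 2) ℝ)
    (hf : Measurable fun q : Y × X => f q.1 q.2)
    (hfp : ∀ᵐ i ∂p, Function.Bijective (f i) ∧ MeasurePreserving (f i) μ μ)
    (hA : Measurable fun q : Y × X => ((A q.1 q.2 : Matrix (Fin 2) (Fin 2) ℝ)))
    (herg : Ergodic (fbar f) (Pr.prod μ))
    (hunb : ∀ᵐ q ∂(Pr.prod μ), ConvergesEssentiallyToInfinity fun n =>
        opNorm ((cocycleIter (fbar f) (Abar A) n q : GL (Fin 2) ℝ) :
          Matrix (Fin 2) (Fin 2) ℝ)) :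
    ∃ P : X → GL (Fin 2) ℝ,
      Measurable (fun x => ((P x : Matrix (Fin 2) (Fin 2) ℝ))) ∧
      ∀ μhat : Measure (X × Proj 2), IsProbabilityMeasure μhat →
        μhat.map Prod.fst = μ →
        (∀ᵐ i ∂p, μhat.map (fun q : X × Proj 2 =>
            (f i q.1, projAction ((P (f i q.1))⁻¹ * A i q.1 * P q.1) q.2)) = μhat) →
        ∃ ν : Measure (Proj 2), IsProbabilityMeasure ν ∧ μhat = μ.prod ν := by
  obtain ⟨P, hP, hprod⟩ := stmt7_general (G := GL (Fin 2) ℝ) (K := Proj 2) hPr hf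
    (hfp.mono fun i h => ⟨h.1.injective, h.2⟩) (measurable_comap_iff.2 hA) herg
  exact ⟨P, measurable_comap_iff.1 hP, hprod⟩
end
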